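/- Let H be a finite-dimensional odd-dimensional quasitriangular Hopf algebra (H, R) over an algebraically closed field of characteristic 0. Then H is semisimple if and only if the Hopf subalgebra H_l = {(f ⊗ id)(R) : f ∈ H*} is semisimple. -/

import Mathlib

/-!
For a Hopf algebra whose antipode square `S²` has finite order, semisimplicity is `S² = 1` (Larson
and Radford). On the one hand `Tr(S²) = ε(L)` for the left integral `L` representing
`f ↦ Tr(S² ∘ (x ↦ ∑ f(x₁) x₂))`, so `Tr(S²) ≠ 0` implies semisimplicity by Maschke's theorem. On the
other hand, for semisimple `H` the traces of `S²` on the Wedderburn blocks are nonnegative under an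
embedding into `ℂ`, so `Tr(S²) ≠ 0`; moreover `Tr(S²) / dim H` is an algebraic integer and an
average of roots of unity, so by Kronecker's argument all eigenvalues of `S²` coincide.

The Drinfeld element `u = ∑ S(b) a` of `R = ∑ a ⊗ b` implements `S²`, and `g = u S(u)⁻¹` is a
group-like element implementing `S⁴`. As group-like elements have finite order, so does `S²`, both
on `H` and on `H_l`. If `S²` fixes `H_l`, then `(id ⊗ S²)(R) = R`, so `u` and `S(u)` commute with
every `S(b)`, and the trace property of the regular character `χ` gives `χ(gʲ) = χ(1) = dim H` for
all `j`. Hence `g = 1` and `S⁴ = 1`, so the eigenvalues of `S²` are `±1`, and `Tr(S²) ≠ 0` because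
`dim H` is odd.
-/

open TensorProduct

namespace FiniteHopf

open Module

section FiniteOrderOperators

variable {k V : Type*} [Field k] [AddCommGroup V] [Module k V]

lemma isSemisimple_of_pow_eq_one [CharZero k] {T : End k V} {N : ℕ} (hN : N ≠ 0) (hT : T ^ N = 1) :
    T.IsSemisimple :=
  End.isSemisimple_of_squarefree_aeval_eq_zero (p := Polynomial.X ^ N - 1)
    (Polynomial.X_pow_sub_one_separable_iff.mpr (Nat.cast_ne_zero.mpr hN)).squarefree (by simp [hT])

lemma pow_apply_of_mem_eigenspace {T : End k V} {μ : k} {v : V} (hv : v ∈ T.eigenspace μ) (j : ℕ) :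
    (T ^ j) v = μ ^ j • v := by
  induction j with
  | zero => simp
  | succ j ih =>
    rw [pow_succ', End.mul_apply, ih, map_smul, End.mem_eigenspace_iff.mp hv, smul_smul, pow_succ]

variable [FiniteDimensional k V]

lemma trace_eq_finrank_range_of_isIdempotentElem {p : End k V} (hp : IsIdempotentElem p) :
    LinearMap.trace k V p = finrank k (LinearMap.range p) :=
  ((LinearMap.isProj_range_iff_isIdempotentElem p).mpr hp).trace

lemma eq_one_of_isIdempotentElem_of_trace_eq_finrank [CharZero k] {p : End k V}
    (hp : IsIdempotentElem p) (htr : LinearMap.trace k V p = finrank k V) : p = 1 := by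
  rw [trace_eq_finrank_range_of_isIdempotentElem hp, Nat.cast_inj] at htr
  have hsurj : Function.Surjective p :=
    LinearMap.range_eq_top.mp (Submodule.eq_top_of_finrank_eq htr)
  ext v
  obtain ⟨w, rfl⟩ := hsurj v
  exact LinearMap.congr_fun hp w

lemma trace_ne_zero_of_sq_eq_one_of_odd_finrank [CharZero k] {T : End k V} (hT : T ^ 2 = 1)
    (hodd : Odd (finrank k V)) : LinearMap.trace k V T ≠ 0 := by
  have h2 : (2 : k) ≠ 0 := two_ne_zero
  have hidem : IsIdempotentElem ((2⁻¹ : k) • (1 + T)) := by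
    have hsq : (1 + T) * (1 + T) = (2 : k) • (1 + T) := by
      rw [add_mul, mul_add, mul_add, ← sq T, hT, two_smul, one_mul, mul_one, one_mul, add_comm T 1]
    rw [IsIdempotentElem, smul_mul_smul_comm, hsq, smul_smul, inv_mul_cancel_right₀ h2]
  intro hzero
  have htr := trace_eq_finrank_range_of_isIdempotentElem hidem
  rw [map_smul, map_add, hzero, LinearMap.trace_one, add_zero, smul_eq_mul,
    inv_mul_eq_iff_eq_mul₀ h2] at htr
  have heven : finrank k V = 2 * finrank k (LinearMap.range ((2⁻¹ : k) • (1 + T))) := by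
    exact_mod_cast htr
  exact Nat.not_even_iff_odd.mpr hodd (heven ▸ even_two_mul _)

/-- Averaging over the powers of `T` gives the projection onto the fixed vectors, whose rank is the
average of the traces. -/
lemma eq_one_of_pow_eq_one_of_trace_pow_eq_finrank [CharZero k] {T : End k V} {M : ℕ} (hM : M ≠ 0)
    (hT : T ^ M = 1) (htr : ∀ j, LinearMap.trace k V (T ^ j) = finrank k V) : T = 1 := by
  have hM' : (M : k) ≠ 0 := Nat.cast_ne_zero.mpr hM
  set p : End k V := (M : k)⁻¹ • ∑ j ∈ Finset.range M, T ^ j with hp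
  have hTp : T * p = p := by
    rw [hp, mul_smul_comm, Finset.mul_sum]
    congr 1
    simp only [← pow_succ']
    rw [← sub_eq_zero, ← Finset.sum_sub_distrib, Finset.sum_range_sub (T ^ ·), hT, pow_zero,
      sub_self]
  have hpow (j : ℕ) : T ^ j * p = p := by
    induction j with
    | zero => rw [pow_zero, one_mul]
    | succ j ih => rw [pow_succ, mul_assoc, hTp, ih]
  have hidem : IsIdempotentElem p := by
    change p * p = p
    nth_rewrite 1 [hp]
    rw [smul_mul_assoc, Finset.sum_mul, Finset.sum_congr rfl fun j _ ↦ hpow j, Finset.sum_const,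
      Finset.card_range, ← Nat.cast_smul_eq_nsmul k, inv_smul_smul₀ hM']
  have hp1 : p = 1 := by
    refine eq_one_of_isIdempotentElem_of_trace_eq_finrank hidem ?_
    rw [hp, map_smul, map_sum, Finset.sum_congr rfl fun j _ ↦ htr j, Finset.sum_const,
      Finset.card_range, nsmul_eq_mul, smul_eq_mul, inv_mul_cancel_left₀ hM']
  rwa [hp1, mul_one] at hTp

variable {L : Type*} [Field L] [Algebra L k]

lemma iSup_eigenspace_nthRoots_eq_top [IsAlgClosed k] [CharZero k] {T : End k V} {N : ℕ} [NeZero N]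
    (hT : T ^ N = 1) {ζ : L} (hζ : IsPrimitiveRoot ζ N) :
    ⨆ μ : Polynomial.nthRootsFinset N (1 : L), T.eigenspace (algebraMap L k μ) = ⊤ := by
  rw [eq_top_iff, ← (isSemisimple_of_pow_eq_one (NeZero.ne N) hT).iSup_eigenspace_eq_top]
  refine iSup_le fun μ ↦ ?_
  obtain hbot | hbot := eq_or_ne (T.eigenspace μ) ⊥
  · exact hbot ▸ bot_le
  obtain ⟨v, hv, hv0⟩ := Submodule.exists_mem_ne_zero_of_ne_bot hbot
  have hμ : μ ^ N = 1 := by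
    have hfix := pow_apply_of_mem_eigenspace hv N
    rw [hT, End.one_apply] at hfix
    exact smul_left_injective k hv0 (by simpa using hfix.symm)
  obtain ⟨i, -, rfl⟩ :=
    (hζ.map_of_injective (algebraMap L k).injective).eq_pow_of_pow_eq_one hμ
  have hmem : ζ ^ i ∈ Polynomial.nthRootsFinset N (1 : L) := by
    rw [Polynomial.mem_nthRootsFinset (NeZero.pos N), pow_right_comm, hζ.pow_eq_one, one_pow]
  rw [← map_pow]
  exact le_iSup (fun μ : Polynomial.nthRootsFinset N (1 : L) ↦ T.eigenspace (algebraMap L k μ))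
    ⟨ζ ^ i, hmem⟩

lemma trace_pow_eq_sum_nthRoots [IsAlgClosed k] [CharZero k] {T : End k V} {N : ℕ} [NeZero N]
    (hT : T ^ N = 1) {ζ : L} (hζ : IsPrimitiveRoot ζ N) (j : ℕ) :
    LinearMap.trace k V (T ^ j) = algebraMap L k (∑ μ ∈ Polynomial.nthRootsFinset N (1 : L),
      finrank k (T.eigenspace (algebraMap L k μ)) * μ ^ j) := by
  classical
  have hinternal := DirectSum.isInternal_submodule_of_iSupIndep_of_iSup_eq_top
    (A := fun μ : Polynomial.nthRootsFinset N (1 : L) ↦ T.eigenspace (algebraMap L k μ))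
    (T.eigenspaces_iSupIndep.comp ((algebraMap L k).injective.comp Subtype.val_injective))
    (iSup_eigenspace_nthRoots_eq_top hT hζ)
  have hmaps (μ : Polynomial.nthRootsFinset N (1 : L)) :
      Set.MapsTo (T ^ j) (T.eigenspace (algebraMap L k μ)) (T.eigenspace (algebraMap L k μ)) :=
    fun v hv ↦ by
      rw [pow_apply_of_mem_eigenspace hv]
      exact Submodule.smul_mem _ _ hv
  rw [map_sum, ← Finset.sum_coe_sort, LinearMap.trace_eq_sum_trace_restrict hinternal hmaps]
  refine Finset.sum_congr rfl fun μ _ ↦ ?_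
  have hscalar : (T ^ j).restrict (hmaps μ) = algebraMap L k μ ^ j • LinearMap.id := by
    ext v
    exact pow_apply_of_mem_eigenspace v.2 j
  rw [hscalar, map_smul, LinearMap.trace_id, smul_eq_mul, map_mul, map_natCast, map_pow, mul_comm]

lemma sum_finrank_eigenspace_nthRoots [IsAlgClosed k] [CharZero k] {T : End k V} {N : ℕ} [NeZero N]
    (hT : T ^ N = 1) {ζ : L} (hζ : IsPrimitiveRoot ζ N) :
    ∑ μ ∈ Polynomial.nthRootsFinset N (1 : L), finrank k (T.eigenspace (algebraMap L k μ)) =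
      finrank k V := by
  have htr := trace_pow_eq_sum_nthRoots hT hζ 0
  simp only [pow_zero, mul_one, LinearMap.trace_one, map_sum, map_natCast] at htr
  exact_mod_cast htr.symm

end FiniteOrderOperators

section RootsOfUnityAverages

lemma eq_of_norm_sum_natCast_mul_eq {ι : Type*} {s : Finset ι} {m : ι → ℕ} {z : ι → ℂ}
    (hz : ∀ i ∈ s, ‖z i‖ = 1) (hsum : ‖∑ i ∈ s, m i * z i‖ = ∑ i ∈ s, (m i : ℝ))
    {i j : ι} (hi : i ∈ s) (hj : j ∈ s) (hmi : m i ≠ 0) (hmj : m j ≠ 0) : z i = z j := by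
  obtain ⟨w, hw, hws⟩ : ∃ w : ℂ, ‖w‖ = 1 ∧ ‖∑ i ∈ s, m i * z i‖ = w * ∑ i ∈ s, m i * z i :=
    RCLike.exists_norm_eq_mul_self _
  have hle (l : ι) (hl : l ∈ s) : (w * (m l * z l)).re ≤ m l := by
    refine (Complex.re_le_norm _).trans_eq ?_
    rw [norm_mul, norm_mul, hw, hz l hl, one_mul, mul_one, Complex.norm_natCast]
  have hre : ∑ l ∈ s, (w * (m l * z l)).re = ∑ l ∈ s, (m l : ℝ) := by
    rw [← Complex.re_sum, ← Finset.mul_sum, ← hws, Complex.ofReal_re, hsum]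
  have heq (l : ι) (hl : l ∈ s) (hml : m l ≠ 0) : w * z l = 1 := by
    have hl' := (Finset.sum_eq_sum_iff_of_le hle).mp hre l hl
    rw [mul_left_comm, ← Complex.ofReal_natCast, Complex.re_ofReal_mul,
      mul_eq_left₀ (Nat.cast_ne_zero.mpr hml)] at hl'
    have hnorm : ‖w * z l‖ = 1 := by rw [norm_mul, hw, hz l hl, one_mul]
    exact Complex.ext hl' (Complex.re_eq_norm.mp (hl'.trans hnorm.symm)).2.symm
  exact mul_left_cancel₀ (norm_ne_zero_iff.mp (hw ▸ one_ne_zero))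
    ((heq i hi hmi).trans (heq j hj hmj).symm)

/-- By Kronecker's theorem an average of roots of unity which is a nonzero algebraic integer is
itself a root of unity, so the averaged roots of unity coincide. -/
lemma eq_of_isIntegral_average_nthRoots {L : Type*} [Field L] [NumberField L] {N : ℕ} [NeZero N]
    {m : L → ℕ} {α : L} (hα : IsIntegral ℤ α) (hα0 : α ≠ 0)
    (hsum : ∑ μ ∈ Polynomial.nthRootsFinset N (1 : L), m μ * μ =
      (∑ μ ∈ Polynomial.nthRootsFinset N (1 : L), m μ : ℕ) * α)
    {μ ν : L} (hμ : μ ^ N = 1) (hν : ν ^ N = 1) (hmμ : m μ ≠ 0) (hmν : m ν ≠ 0) : μ = ν := by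
  set s := Polynomial.nthRootsFinset N (1 : L)
  have hs {μ : L} : μ ∈ s ↔ μ ^ N = 1 := Polynomial.mem_nthRootsFinset (NeZero.pos N) 1
  have hn : (0 : ℝ) < (∑ μ ∈ s, m μ : ℕ) :=
    Nat.cast_pos.mpr (Finset.sum_pos_iff.mpr ⟨μ, hs.mpr hμ, Nat.pos_of_ne_zero hmμ⟩)
  have hnorm (φ : L →+* ℂ) (ξ : L) (hξ : ξ ∈ s) : ‖φ ξ‖ = 1 :=
    Complex.norm_eq_one_of_pow_eq_one (by rw [← map_pow, hs.mp hξ, map_one]) (NeZero.ne N)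
  have hφsum (φ : L →+* ℂ) : ∑ ξ ∈ s, (m ξ : ℂ) * φ ξ = (∑ ξ ∈ s, m ξ : ℕ) * φ α := by
    simpa only [map_sum, map_mul, map_natCast] using congrArg φ hsum
  have hle (φ : L →+* ℂ) : ‖φ α‖ ≤ 1 := by
    have hbound : ‖∑ ξ ∈ s, (m ξ : ℂ) * φ ξ‖ ≤ (∑ ξ ∈ s, m ξ : ℕ) := by
      push_cast
      refine norm_sum_le_of_le s fun ξ hξ ↦ ?_
      rw [norm_mul, hnorm φ ξ hξ, mul_one, Complex.norm_natCast]
    rw [hφsum, norm_mul, Complex.norm_natCast] at hbound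
    exact (mul_le_iff_le_one_right hn).mp hbound
  obtain ⟨M, hM, hαM⟩ := NumberField.Embeddings.pow_eq_one_of_norm_le_one L ℂ hα0 hα hle
  obtain ⟨φ⟩ : Nonempty (L →+* ℂ) := inferInstance
  have hφα : ‖φ α‖ = 1 :=
    Complex.norm_eq_one_of_pow_eq_one (by rw [← map_pow, hαM, map_one]) hM.ne'
  refine φ.injective (eq_of_norm_sum_natCast_mul_eq (hnorm φ) ?_ (hs.mpr hμ) (hs.mpr hν) hmμ hmν)
  rw [hφsum, norm_mul, hφα, mul_one, Complex.norm_natCast, Nat.cast_sum]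

end RootsOfUnityAverages

section TraceIntegrality

variable {k V : Type*} [Field k] [IsAlgClosed k] [AddCommGroup V] [Module k V]
  [FiniteDimensional k V]

lemma isIntegral_trace_of_pow_succ_eq_self {T : End k V} {N : ℕ} (hN : N ≠ 0)
    (hT : T ^ (N + 1) = T) : IsIntegral ℤ (LinearMap.trace k V T) := by
  rw [End.trace_eq_sum_roots_charpoly_of_splits (IsAlgClosed.splits _)]
  refine IsIntegral.multiset_sum fun μ hμ ↦ ?_
  obtain ⟨v, hv⟩ := ((End.hasEigenvalue_iff_isRoot_charpoly T μ).mpr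
    (Polynomial.isRoot_of_mem_roots hμ)).exists_hasEigenvector
  have hvpow := hv.pow_apply (N + 1)
  rw [hT, hv.apply_eq_smul] at hvpow
  have hμN : μ ^ (N + 1) = μ := smul_left_injective k hv.2 hvpow.symm
  refine ⟨.X ^ (N + 1) - .X, Polynomial.monic_X_pow_sub ?_, by simp [hμN]⟩
  rw [Polynomial.degree_X]
  exact_mod_cast Nat.succ_lt_succ (Nat.pos_of_ne_zero hN)

lemma eq_one_of_isIntegral_trace_div_finrank [CharZero k] {L : Type*} [Field L] [NumberField L]
    [Algebra L k] {N : ℕ} [NeZero N] {ζ : L} (hζ : IsPrimitiveRoot ζ N) {T : End k V}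
    (hT : T ^ N = 1) {v : V} (hv : v ≠ 0) (hTv : T v = v) (htr : LinearMap.trace k V T ≠ 0)
    (hint : IsIntegral ℤ (LinearMap.trace k V T / finrank k V)) : T = 1 := by
  let m : L → ℕ := fun μ ↦ finrank k (T.eigenspace (algebraMap L k μ))
  let α : L := (∑ μ ∈ Polynomial.nthRootsFinset N (1 : L), m μ * μ) / finrank k V
  have hdim : ∑ μ ∈ Polynomial.nthRootsFinset N (1 : L), m μ = finrank k V :=
    sum_finrank_eigenspace_nthRoots hT hζ
  have : Nontrivial V := nontrivial_of_ne v 0 hv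
  have hαtr : algebraMap L k α = LinearMap.trace k V T / finrank k V := by
    have htr1 := trace_pow_eq_sum_nthRoots hT hζ 1
    simp only [pow_one] at htr1
    rw [htr1, map_div₀, map_natCast]
  have hsum : ∑ μ ∈ Polynomial.nthRootsFinset N (1 : L), m μ * μ =
      (∑ μ ∈ Polynomial.nthRootsFinset N (1 : L), m μ : ℕ) * α := by
    rw [hdim, mul_div_cancel₀ _ (Nat.cast_ne_zero.mpr finrank_pos.ne')]
  have hαint : IsIntegral ℤ α :=
    (isIntegral_algebraMap_iff (algebraMap L k).injective).mp (hαtr ▸ hint)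
  have hα0 : α ≠ 0 := by
    rw [← map_ne_zero (algebraMap L k), hαtr]
    exact div_ne_zero htr (Nat.cast_ne_zero.mpr finrank_pos.ne')
  have hm1 : m 1 ≠ 0 := by
    rw [Ne, Submodule.finrank_eq_zero]
    refine Submodule.ne_bot_iff _ |>.mpr ⟨v, ?_, hv⟩
    rw [End.mem_eigenspace_iff, hTv, map_one, one_smul]
  have htop : T.eigenspace 1 = ⊤ := by
    rw [eq_top_iff, ← iSup_eigenspace_nthRoots_eq_top hT hζ]
    refine iSup_le fun μ ↦ ?_
    by_cases hmμ : m μ = 0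
    · exact Submodule.finrank_eq_zero.mp hmμ ▸ bot_le
    · have hμ := (Polynomial.mem_nthRootsFinset (NeZero.pos N) 1).mp μ.2
      rw [eq_of_isIntegral_average_nthRoots hαint hα0 hsum hμ (one_pow N) hmμ hm1, map_one]
  ext w
  simpa using End.mem_eigenspace_iff.mp (htop ▸ Submodule.mem_top : w ∈ T.eigenspace 1)

end TraceIntegrality

section AlgebraAutomorphisms

lemma trace_mulLeft_comp_mulRight {R M : Type*} [CommRing R] [AddCommGroup M] [Module R M]
    [Module.Free R M] [Module.Finite R M] (a b : End R M) :
    LinearMap.trace R (End R M) (LinearMap.mulLeft R a ∘ₗ LinearMap.mulRight R b) =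
      LinearMap.trace R M a * LinearMap.trace R M b := by
  have hconj : LinearMap.mulLeft R a ∘ₗ LinearMap.mulRight R b =
      (dualTensorHomEquiv R M M).conj (TensorProduct.map (Module.Dual.transpose (R := R) b) a) := by
    refine LinearMap.ext fun x ↦ ?_
    obtain ⟨y, rfl⟩ := (dualTensorHomEquiv R M M).surjective x
    rw [LinearEquiv.conj_apply_apply, LinearEquiv.symm_apply_apply]
    induction y with
    | zero => simp only [map_zero]
    | add x y hx hy => simp only [map_add, hx, hy]
    | tmul f m =>
      ext w
      simp [dualTensorHomEquiv, End.mul_apply, Module.Dual.transpose]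
  rw [hconj]
  refine (LinearMap.trace_conj' (M := Dual R M ⊗[R] M) (N := End R M)
    (TensorProduct.map (Module.Dual.transpose (R := R) b) a)
    (dualTensorHomEquiv R M M)).trans ?_
  rw [LinearMap.trace_tensorProduct', LinearMap.trace_transpose', mul_comm]

variable {k V L : Type*} [Field k] [AddCommGroup V] [Module k V] [Field L] [Algebra L k]

open scoped ComplexOrder in
/-- The elements of `k` coming from elements of `L` which the embedding `φ` of `L` into the complex
numbers sends to nonnegative reals. This makes positivity meaningful in the abstract field `k`. -/
def nonnegCone (k : Type*) {L : Type*} [Field k] [Field L] [Algebra L k] (φ : L →+* ℂ) :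
    AddSubmonoid k :=
  ((AddSubmonoid.nonneg ℂ).comap (φ : L →+ ℂ)).map (algebraMap L k : L →+ k)

open scoped ComplexOrder in
lemma eq_zero_of_sum_eq_zero_of_mem_nonnegCone {φ : L →+* ℂ} {ι : Type*} {s : Finset ι} {f : ι → k}
    (hf : ∀ i ∈ s, f i ∈ nonnegCone k φ) (hsum : ∑ i ∈ s, f i = 0) {i : ι} (hi : i ∈ s) :
    f i = 0 := by
  choose! y hy hyf using hf
  have hysum : ∑ i ∈ s, y i = 0 := by
    refine (algebraMap L k).injective ?_
    rw [map_zero, map_sum, ← hsum]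
    exact Finset.sum_congr rfl hyf
  have hφsum : ∑ i ∈ s, φ (y i) = 0 := by rw [← map_sum, hysum, map_zero]
  have hφ := (Finset.sum_eq_zero_iff_of_nonneg hy).mp hφsum i hi
  rw [← hyf i hi, (map_eq_zero φ).mp hφ]
  exact map_zero (algebraMap L k)

variable [IsAlgClosed k] [FiniteDimensional k V] {N : ℕ} [NeZero N]

/-- By Skolem–Noether `θ` is conjugation by some `T`; then `T ^ N` is central, hence a scalar, and
can be normalized to `1`. -/
lemma exists_pow_eq_one_of_algHom_end_pow_eq_one {θ : End k V →ₐ[k] End k V} (hθ : θ ^ N = 1) :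
    ∃ U : End k V, U ^ N = 1 ∧ ∀ x, θ x * U = U * x := by
  obtain ⟨e, he⟩ := AlgEquiv.eq_linearEquivConjAlgEquiv
    (AlgEquiv.algHomUnitsEquiv k (End k V) (Units.ofPowEqOne θ N hθ (NeZero.ne N)))
  let T : End k V := e.toLinearMap
  have hT (x : End k V) : θ x * T = T * x := by
    have hθx : θ x = e.conjAlgEquiv k x := DFunLike.congr_fun he x
    ext v
    simp [hθx, T]
  have hTj (j : ℕ) (x : End k V) : (θ ^ j) x * T ^ j = T ^ j * x := by
    induction j generalizing x with
    | zero => simp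
    | succ j ih =>
      rw [pow_succ, pow_succ, AlgHom.mul_apply, ← mul_assoc, ih, mul_assoc, hT, mul_assoc]
  have hcenter : T ^ N ∈ Subalgebra.center k (End k V) := by
    rw [Subalgebra.mem_center_iff]
    intro x
    simpa [hθ] using hTj N x
  rw [Algebra.IsCentral.center_eq_bot, Algebra.mem_bot] at hcenter
  obtain ⟨c, hc⟩ := hcenter
  obtain hV | hV := subsingleton_or_nontrivial V
  · exact ⟨T, Subsingleton.elim _ _, hT⟩
  have hTunit : IsUnit T := (End.isUnit_iff T).mpr e.bijective
  have hc0 : c ≠ 0 := by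
    rintro rfl
    exact (hTunit.pow N).ne_zero (by rw [← hc, map_zero])
  obtain ⟨s, hs⟩ := IsAlgClosed.exists_pow_nat_eq c⁻¹ (NeZero.pos N)
  refine ⟨s • T, ?_, fun x ↦ by rw [mul_smul_comm, smul_mul_assoc, hT]⟩
  rw [smul_pow, ← hc, hs, Algebra.algebraMap_eq_smul_one, inv_smul_smul₀ hc0]

open scoped ComplexOrder in
/-- For `θ` conjugation by `U` the trace is `tr U * tr U⁻¹`, the squared modulus of `tr U`. -/
lemma trace_algHom_end_mem_nonnegCone [CharZero k] {ζ : L} (hζ : IsPrimitiveRoot ζ N) (φ : L →+* ℂ)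
    {θ : End k V →ₐ[k] End k V} (hθ : θ ^ N = 1) :
    LinearMap.trace k (End k V) θ.toLinearMap ∈ nonnegCone k φ := by
  obtain ⟨U, hU, hθU⟩ := exists_pow_eq_one_of_algHom_end_pow_eq_one hθ
  have hUinv : U * U ^ (N - 1) = 1 := by
    rw [← pow_succ', Nat.sub_add_cancel NeZero.one_le, hU]
  have hθ_eq : θ.toLinearMap = LinearMap.mulLeft k U ∘ₗ LinearMap.mulRight k (U ^ (N - 1)) := by
    refine LinearMap.ext fun x ↦ ?_
    change θ x = U * (x * U ^ (N - 1))
    rw [← mul_assoc, ← hθU, mul_assoc, hUinv, mul_one]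
  let t (j : ℕ) : L := ∑ μ ∈ Polynomial.nthRootsFinset N (1 : L),
    finrank k (U.eigenspace (algebraMap L k μ)) * μ ^ j
  have htrace : LinearMap.trace k V U = algebraMap L k (t 1) := by
    rw [← trace_pow_eq_sum_nthRoots hU hζ, pow_one]
  have hconj : φ (t (N - 1)) = star (φ (t 1)) := by
    simp only [t, map_sum, map_mul, map_natCast, map_pow, pow_one, star_sum, star_mul',
      star_natCast]
    refine Finset.sum_congr rfl fun μ hμ ↦ ?_
    have hμN : φ μ ^ N = 1 := by
      rw [← map_pow, (Polynomial.mem_nthRootsFinset (NeZero.pos N) 1).mp hμ, map_one]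
    congr 1
    refine Eq.trans ?_
      (Complex.inv_eq_conj (Complex.norm_eq_one_of_pow_eq_one hμN (NeZero.ne N)))
    exact eq_inv_of_mul_eq_one_left (by rw [← pow_succ, Nat.sub_add_cancel NeZero.one_le, hμN])
  refine ⟨t 1 * t (N - 1), ?_, ?_⟩
  · change 0 ≤ φ (t 1 * t (N - 1))
    rw [map_mul, hconj]
    exact mul_star_self_nonneg _
  · rw [hθ_eq, trace_mulLeft_comp_mulRight, htrace, trace_pow_eq_sum_nthRoots hU hζ]
    exact map_mul (algebraMap L k) _ _

end AlgebraAutomorphisms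

section ProductAlgebras

lemma trace_pi {R ι : Type*} [CommRing R] [Fintype ι] [DecidableEq ι] {M : ι → Type*}
    [∀ i, AddCommGroup (M i)] [∀ i, Module R (M i)] [∀ i, Module.Free R (M i)]
    [∀ i, Module.Finite R (M i)] (F : End R (Π i, M i)) :
    LinearMap.trace R (Π i, M i) F =
      ∑ i, LinearMap.trace R (M i) (LinearMap.proj i ∘ₗ F ∘ₗ LinearMap.single R M i) := by
  have hF : F = ∑ i, (F ∘ₗ LinearMap.single R M i) ∘ₗ LinearMap.proj i := by
    refine LinearMap.ext fun x ↦ ?_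
    conv_lhs => rw [← Finset.univ_sum_single x, map_sum]
    simp
  conv_lhs => rw [hF, map_sum]
  exact Finset.sum_congr rfl fun i _ ↦ LinearMap.trace_comp_comm' _ _

variable {k ι : Type*} [Field k] [DecidableEq ι] {A : ι → Type*} [∀ i, Ring (A i)]
  [∀ i, Algebra k (A i)]

/-- The restriction to the `i`-th factor of an endomorphism of a product of algebras that fixes the
`i`-th central idempotent. -/
def piBlock (θ : (Π i, A i) →ₐ[k] Π i, A i) (i : ι) (hθ : θ (Pi.single i 1) = Pi.single i 1) :
    A i →ₐ[k] A i :=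
  AlgHom.ofLinearMap (LinearMap.proj i ∘ₗ θ.toLinearMap ∘ₗ LinearMap.single k A i)
    (by simp [hθ]) (by simp [Pi.single_mul])

lemma map_single_eq_single_piBlock {θ : (Π i, A i) →ₐ[k] Π i, A i} {i : ι}
    (hθ : θ (Pi.single i 1) = Pi.single i 1) (x : A i) :
    θ (Pi.single i x) = Pi.single i (piBlock θ i hθ x) := by
  change θ (Pi.single i x) = Pi.single i (θ (Pi.single i x) i)
  have hx : θ (Pi.single i x) = θ (Pi.single i x) * Pi.single i 1 := by
    rw [← hθ, ← map_mul, ← Pi.single_mul, mul_one]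
  ext j
  by_cases hj : j = i
  · subst hj
    rw [Pi.single_eq_same]
  · rw [hx, Pi.mul_apply, Pi.single_eq_of_ne hj, Pi.single_eq_of_ne hj, mul_zero]

lemma piBlock_pow_eq_one {θ : (Π i, A i) →ₐ[k] Π i, A i} {N : ℕ} (hN : θ ^ N = 1) {i : ι}
    (hθ : θ (Pi.single i 1) = Pi.single i 1) : piBlock θ i hθ ^ N = 1 := by
  have hpow (j : ℕ) (x : A i) :
      (θ ^ j) (Pi.single i x) = Pi.single i ((piBlock θ i hθ ^ j) x) := by
    induction j generalizing x with
    | zero => rfl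
    | succ j ih =>
      rw [pow_succ, pow_succ, AlgHom.mul_apply, map_single_eq_single_piBlock hθ, ih,
        AlgHom.mul_apply]
  ext x
  refine Pi.single_injective (M := A) i ?_
  rw [← hpow N x, hN, AlgHom.one_apply, AlgHom.one_apply]

end ProductAlgebras

section Semisimple

variable {k : Type*} [Field k] [IsAlgClosed k] [CharZero k] {N : ℕ} [NeZero N]

lemma exists_numberField_isPrimitiveRoot (k : Type*) [Field k] [IsAlgClosed k] [CharZero k] (N : ℕ)
    [NeZero N] : ∃ (L : Type) (_ : Field L) (_ : NumberField L) (_ : Algebra L k) (ζ : L),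
      IsPrimitiveRoot ζ N := by
  have : NeZero (N : ℚ) := ⟨Nat.cast_ne_zero.mpr (NeZero.ne N)⟩
  have : IsCyclotomicExtension {N} ℚ (CyclotomicField N ℚ) :=
    CyclotomicField.isCyclotomicExtension N ℚ
  exact ⟨CyclotomicField N ℚ, inferInstance, inferInstance,
    (IsAlgClosed.lift : CyclotomicField N ℚ →ₐ[ℚ] k).toAlgebra, _,
    IsCyclotomicExtension.zeta_spec N ℚ _⟩

/-- The trace of `θ` on each block is nonnegative, so all of them vanish if their sum does. -/
lemma trace_comp_mulLeft_eq_zero_of_trace_eq_zero_pi {ι : Type*} [Finite ι] {V : ι → Type*}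
    [∀ i, AddCommGroup (V i)] [∀ i, Module k (V i)] [∀ i, FiniteDimensional k (V i)]
    {θ : (Π i, End k (V i)) →ₐ[k] Π i, End k (V i)} (hN : θ ^ N = 1)
    (hcenter : ∀ z ∈ Subalgebra.center k (Π i, End k (V i)), θ z = z)
    (htr : LinearMap.trace k _ θ.toLinearMap = 0) {z : Π i, End k (V i)}
    (hz : z ∈ Subalgebra.center k (Π i, End k (V i))) :
    LinearMap.trace k _ (θ.toLinearMap ∘ₗ LinearMap.mulLeft k z) = 0 := by
  have := Fintype.ofFinite ι
  classical
  obtain ⟨L, _, _, _, ζ, hζ⟩ := exists_numberField_isPrimitiveRoot k N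
  obtain ⟨φ⟩ : Nonempty (L →+* ℂ) := inferInstance
  have hθ (i : ι) : θ (Pi.single i 1) = Pi.single i 1 := by
    refine hcenter _ (Subalgebra.mem_center_iff.mpr fun x ↦ ?_)
    rw [← Pi.single_mul_left, ← Pi.single_mul_right, mul_one, one_mul]
  have hblock (i : ι) :
      LinearMap.trace k _ (piBlock θ i (hθ i)).toLinearMap ∈ nonnegCone k φ :=
    trace_algHom_end_mem_nonnegCone hζ φ (piBlock_pow_eq_one hN (hθ i))
  have hsum : ∑ i, LinearMap.trace k _ (piBlock θ i (hθ i)).toLinearMap = 0 := by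
    rw [← htr, trace_pi]
    rfl
  rw [trace_pi]
  refine Finset.sum_eq_zero fun i _ ↦ ?_
  obtain ⟨c, hc⟩ : ∃ c : k, algebraMap k (End k (V i)) c = z i := by
    refine Algebra.mem_bot.mp ?_
    rw [← Algebra.IsCentral.center_eq_bot k, Subalgebra.mem_center_iff]
    intro x
    simpa using congrFun (Subalgebra.mem_center_iff.mp hz (Pi.single i x)) i
  have hscalar : LinearMap.proj i ∘ₗ (θ.toLinearMap ∘ₗ LinearMap.mulLeft k z) ∘ₗ
      LinearMap.single k (fun i ↦ End k (V i)) i = c • (piBlock θ i (hθ i)).toLinearMap := by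
    refine LinearMap.ext fun x ↦ ?_
    change θ (z * Pi.single i x) i = c • θ (Pi.single i x) i
    rw [← Pi.single_mul_right, ← hc, ← Algebra.smul_def, Pi.single_smul, map_smul, Pi.smul_apply]
  rw [hscalar, map_smul, eq_zero_of_sum_eq_zero_of_mem_nonnegCone (fun i _ ↦ hblock i) hsum
    (Finset.mem_univ i), smul_zero]

theorem trace_comp_mulLeft_eq_zero_of_trace_eq_zero {A : Type*} [Ring A] [Algebra k A]
    [FiniteDimensional k A] [IsSemisimpleRing A] {θ : A →ₐ[k] A} (hN : θ ^ N = 1)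
    (hcenter : ∀ z ∈ Subalgebra.center k A, θ z = z)
    (htr : LinearMap.trace k A θ.toLinearMap = 0) {z : A} (hz : z ∈ Subalgebra.center k A) :
    LinearMap.trace k A (θ.toLinearMap ∘ₗ LinearMap.mulLeft k z) = 0 := by
  obtain ⟨n, d, -, ⟨e₀⟩⟩ := IsSemisimpleRing.exists_algEquiv_pi_matrix_of_isAlgClosed k A
  let e : A ≃ₐ[k] Π i, End k (Fin (d i) → k) :=
    e₀.trans (AlgEquiv.piCongrRight fun i ↦ Matrix.toLinAlgEquiv')
  let θ' : (Π i, End k (Fin (d i) → k)) →ₐ[k] Π i, End k (Fin (d i) → k) :=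
    (e.toAlgHom.comp θ).comp e.symm.toAlgHom
  have hθ' (x : A) : θ' (e x) = e (θ x) := by simp [θ']
  have hcenter_iff {x : A} : e x ∈ Subalgebra.center k _ ↔ x ∈ Subalgebra.center k A :=
    MulEquivClass.apply_mem_center_iff e
  have hpow (j : ℕ) (x : A) : (θ' ^ j) (e x) = e ((θ ^ j) x) := by
    induction j generalizing x with
    | zero => rfl
    | succ j ih => rw [pow_succ, pow_succ, AlgHom.mul_apply, hθ', ih, AlgHom.mul_apply]
  have hN' : θ' ^ N = 1 := by
    refine AlgHom.ext (e.surjective.forall.mpr fun x ↦ ?_)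
    rw [hpow, hN, AlgHom.one_apply, AlgHom.one_apply]
  have hcenter' : ∀ y ∈ Subalgebra.center k _, θ' y = y :=
    e.surjective.forall.mpr fun x hx ↦ by rw [hθ', hcenter x (hcenter_iff.mp hx)]
  rw [← LinearMap.trace_conj' _ e.toLinearEquiv] at htr ⊢
  have hcomp : e.toLinearEquiv.conj (θ.toLinearMap ∘ₗ LinearMap.mulLeft k z) =
      θ'.toLinearMap ∘ₗ LinearMap.mulLeft k (e z) := by
    refine LinearMap.ext fun x ↦ ?_
    simp [θ', LinearEquiv.conj_apply]
  rw [hcomp]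
  exact trace_comp_mulLeft_eq_zero_of_trace_eq_zero_pi hN' hcenter' htr (hcenter_iff.mpr hz)

end Semisimple

open Coalgebra HopfAlgebra Algebra.TensorProduct WithConv

section Antipode

variable {k H : Type*} [CommRing k] [Ring H] [HopfAlgebra k H]

/-- Both sides are convolution inverses of `comul`, which is the product of the two inclusions. -/
lemma comul_comp_antipode :
    comul ∘ₗ antipode k = TensorProduct.map (antipode k) (antipode k) ∘ₗ
      (TensorProduct.comm k H H).toLinearMap ∘ₗ comul := by
  let i₁ : H →ₐ[k] H ⊗[k] H := includeLeft
  let i₂ : H →ₐ[k] H ⊗[k] H := includeRight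
  have hinv (f : H →ₐ[k] H ⊗[k] H) :
      toConv (f.toLinearMap ∘ₗ antipode k) * toConv f.toLinearMap = 1 := by
    have h := LinearMap.algHom_comp_convMul_distrib f (toConv (antipode k)) (toConv LinearMap.id)
    rw [LinearMap.antipode_mul_id] at h
    refine ofConv_injective (h.symm.trans ?_)
    ext x
    simp
  have hcomul : toConv (comul : H →ₗ[k] H ⊗[k] H) =
      toConv i₁.toLinearMap * toConv i₂.toLinearMap := by
    rw [LinearMap.convMul_def]
    congr 1
    have hid : LinearMap.mul' k (H ⊗[k] H) ∘ₗ TensorProduct.map i₁.toLinearMap i₂.toLinearMap =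
        LinearMap.id := by
      ext
      simp [i₁, i₂]
    exact (LinearMap.id_comp _).symm.trans (congrArg (· ∘ₗ comul) hid.symm)
  have hleft : toConv (TensorProduct.map (antipode k) (antipode k) ∘ₗ
      (TensorProduct.comm k H H).toLinearMap ∘ₗ comul) =
      toConv (i₂.toLinearMap ∘ₗ antipode k) * toConv (i₁.toLinearMap ∘ₗ antipode k) := by
    rw [LinearMap.convMul_def]
    congr 1
    have hmap : TensorProduct.map (antipode k) (antipode k) ∘ₗ
        (TensorProduct.comm k H H).toLinearMap = LinearMap.mul' k (H ⊗[k] H) ∘ₗ TensorProduct.map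
          (i₂.toLinearMap ∘ₗ antipode k) (i₁.toLinearMap ∘ₗ antipode k) := by
      ext
      simp [i₁, i₂]
    exact congrArg (· ∘ₗ comul) hmap
  have hleft_inv : toConv (TensorProduct.map (antipode k) (antipode k) ∘ₗ
      (TensorProduct.comm k H H).toLinearMap ∘ₗ comul) * toConv comul = 1 := by
    rw [hleft, hcomul, mul_assoc, ← mul_assoc _ (toConv i₁.toLinearMap), hinv, one_mul, hinv]
  exact toConv_injective (left_inv_eq_right_inv hleft_inv LinearMap.comul_right_inv).symm

variable (k H) in
/-- The square of the antipode, as an algebra endomorphism. -/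
noncomputable def antipodeSq : H →ₐ[k] H :=
  AlgHom.ofLinearMap (antipode k ∘ₗ antipode k) (by simp)
    (by simp [HopfAlgebra.antipode_mul_antidistrib])

lemma antipodeSq_apply (x : H) : antipodeSq k H x = antipode k (antipode k x) := rfl

lemma comul_antipodeSq (x : H) :
    comul (antipodeSq k H x) =
      TensorProduct.map (antipodeSq k H).toLinearMap (antipodeSq k H).toLinearMap (comul x) := by
  have hcomul (y : H) := DFunLike.congr_fun (comul_comp_antipode (k := k) (H := H)) y
  have hswap : ((TensorProduct.map (antipode k) (antipode k) ∘ₗ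
      (TensorProduct.comm k H H).toLinearMap) ∘ₗ TensorProduct.map (antipode k) (antipode k)) ∘ₗ
        (TensorProduct.comm k H H).toLinearMap =
      TensorProduct.map (antipodeSq k H).toLinearMap (antipodeSq k H).toLinearMap := by
    ext
    simp [antipodeSq_apply]
  rw [← hswap]
  exact (hcomul (antipode k x)).trans (congrArg
    ((TensorProduct.map (antipode k) (antipode k) ∘ₗ (TensorProduct.comm k H H).toLinearMap) ·)
    (hcomul x))

lemma counit_antipodeSq (x : H) : counit (R := k) (antipodeSq k H x) = counit (R := k) x := by
  rw [antipodeSq_apply, counit_antipode, counit_antipode]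

lemma antipode_surjective_of_antipodeSq_pow_eq_one {N : ℕ} [NeZero N]
    (hN : antipodeSq k H ^ N = 1) : Function.Surjective (antipode k (A := H)) := by
  intro x
  refine ⟨antipode k ((antipodeSq k H ^ (N - 1)) x), ?_⟩
  rw [← antipodeSq_apply, ← AlgHom.mul_apply, ← pow_succ', Nat.sub_add_cancel NeZero.one_le, hN,
    AlgHom.one_apply]

end Antipode

section GaloisMap

variable {k H : Type*} [CommRing k] [Ring H] [HopfAlgebra k H]

/-- The map `a ⊗ b ↦ Σ a₁ ⊗ f(a₂) b`. For `f = id` it is the canonical Galois map of a Hopf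
algebra, and for `f` the antipode its inverse. -/
noncomputable def galoisMap (f : H →ₗ[k] H) : End k (H ⊗[k] H) :=
  LinearMap.mul' k (H ⊗[k] H) ∘ₗ
    TensorProduct.map (LinearMap.lTensor H f ∘ₗ comul) (includeRight : H →ₐ[k] H ⊗[k] H).toLinearMap

lemma galoisMap_tmul (f : H →ₗ[k] H) (a b : H) :
    galoisMap f (a ⊗ₜ b) = LinearMap.lTensor H f (comul a) * (1 ⊗ₜ b) := rfl

lemma galoisMap_mul_galoisMap (f g : H →ₗ[k] H) :
    galoisMap f * galoisMap g = galoisMap (toConv f * toConv g).ofConv := by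
  refine TensorProduct.ext' fun a b ↦ ?_
  let F : H ⊗[k] (H ⊗[k] H) →ₗ[k] H ⊗[k] H :=
    LinearMap.lTensor H (LinearMap.mulRight k b ∘ₗ LinearMap.mul' k H ∘ₗ TensorProduct.map f g)
  have hleft (X : H ⊗[k] H) : galoisMap f (LinearMap.lTensor H g X * (1 ⊗ₜ b)) =
      F (TensorProduct.assoc k H H H (LinearMap.rTensor H comul X)) := by
    induction X with
    | zero => simp
    | add X Y hX hY => simp only [map_add, add_mul, hX, hY]
    | tmul x y =>
      rw [LinearMap.lTensor_tmul, tmul_mul_tmul, mul_one, galoisMap_tmul, LinearMap.rTensor_tmul]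
      induction comul (R := k) x with
      | zero => simp
      | add X Y hX hY => simp only [map_add, add_mul, TensorProduct.add_tmul, hX, hY]
      | tmul u v => simp [F, mul_assoc]
  have hright (X : H ⊗[k] H) : LinearMap.lTensor H (toConv f * toConv g).ofConv X * (1 ⊗ₜ b) =
      F (LinearMap.lTensor H comul X) := by
    induction X with
    | zero => simp
    | add X Y hX hY => simp only [map_add, add_mul, hX, hY]
    | tmul x y => simp [F, LinearMap.convMul_def]
  rw [End.mul_apply, galoisMap_tmul, galoisMap_tmul, hleft, hright, coassoc_apply]

lemma galoisMap_algebraMap_comp_counit :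
    galoisMap (Algebra.linearMap k H ∘ₗ counit) = 1 := by
  refine TensorProduct.ext' fun a b ↦ ?_
  rw [galoisMap_tmul, LinearMap.lTensor_comp, LinearMap.comp_apply, lTensor_counit_comul]
  simp

lemma galoisMap_id_mul_galoisMap_antipode :
    galoisMap LinearMap.id * galoisMap (antipode k (A := H)) = 1 := by
  rw [galoisMap_mul_galoisMap, LinearMap.id_mul_antipode, LinearMap.convOne_def,
    ← galoisMap_algebraMap_comp_counit]

lemma galoisMap_antipode_mul_galoisMap_id :
    galoisMap (antipode k (A := H)) * galoisMap LinearMap.id = 1 := by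
  rw [galoisMap_mul_galoisMap, LinearMap.antipode_mul_id, LinearMap.convOne_def,
    ← galoisMap_algebraMap_comp_counit]

lemma galoisMap_id_tmul_one_mul (h : H) (X : H ⊗[k] H) :
    galoisMap LinearMap.id ((h ⊗ₜ 1) * X) = comul h * galoisMap LinearMap.id X := by
  induction X with
  | zero => simp
  | add X Y hX hY => rw [mul_add, map_add, map_add, mul_add, hX, hY]
  | tmul x y => simp [galoisMap_tmul, mul_assoc]

lemma galoisMap_antipode_comul_mul (h : H) (X : H ⊗[k] H) :
    galoisMap (antipode k) (comul h * X) = (h ⊗ₜ 1) * galoisMap (antipode k) X := by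
  have hinv (Y : H ⊗[k] H) := DFunLike.congr_fun (galoisMap_id_mul_galoisMap_antipode (k := k)) Y
  have hinv' (Y : H ⊗[k] H) := DFunLike.congr_fun (galoisMap_antipode_mul_galoisMap_id (k := k)) Y
  simp only [End.mul_apply, End.one_apply] at hinv hinv'
  conv_lhs => rw [← hinv X]
  rw [← galoisMap_id_tmul_one_mul, hinv']

end GaloisMap

section Integrals

/-- The separability idempotent `C` averages a linear projection onto a submodule to a module
projection `x ↦ Σ c₁ q(c₂ x)`. -/
theorem isSemisimpleRing_of_separability {k A : Type*} [Field k] [Ring A] [Algebra k A]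
    {C : A ⊗[k] A} (hC : ∀ a, (a ⊗ₜ 1) * C = C * (1 ⊗ₜ a)) (hC_one : LinearMap.mul' k A C = 1) :
    IsSemisimpleRing A := by
  suffices ComplementedLattice (Submodule A A) from { toComplementedLattice := this }
  refine ⟨fun N ↦ ?_⟩
  obtain ⟨p, hp⟩ := LinearMap.exists_leftInverse_of_injective (N.restrictScalars k).subtype
    (Submodule.ker_subtype _)
  let q : A →ₗ[k] A := (N.restrictScalars k).subtype ∘ₗ p
  have hq_mem (x : A) : q x ∈ N := (p x).2
  have hq {x : A} (hx : x ∈ N) : q x = x :=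
    congrArg (N.restrictScalars k).subtype (DFunLike.congr_fun hp ⟨x, hx⟩)
  obtain ⟨s, rfl⟩ := TensorProduct.exists_finset C
  have hq_smul (a x : A) : ∑ c ∈ s, c.1 * q (c.2 * (a * x)) = a * ∑ c ∈ s, c.1 * q (c.2 * x) := by
    have h := congrArg (LinearMap.mul' k A ∘ₗ LinearMap.lTensor A (q ∘ₗ LinearMap.mulRight k x))
      (hC a)
    simpa [Finset.mul_sum, Finset.sum_mul, mul_assoc] using h.symm
  let P : A →ₗ[A] N :=
    { toFun := fun x ↦ ⟨∑ c ∈ s, c.1 * q (c.2 * x), N.sum_mem fun c _ ↦ N.smul_mem _ (hq_mem _)⟩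
      map_add' := fun x y ↦ Subtype.ext (by simp [mul_add, Finset.sum_add_distrib])
      map_smul' := fun a x ↦ Subtype.ext (hq_smul a x) }
  refine ⟨_, LinearMap.isCompl_of_proj (f := P) fun x ↦ Subtype.ext ?_⟩
  have hPx (c : A × A) : c.1 * q (c.2 * x) = LinearMap.mul' k A (c.1 ⊗ₜ c.2) * x := by
    rw [hq (x := c.2 * x) (N.smul_mem c.2 x.2), LinearMap.mul'_apply, mul_assoc]
  change ∑ c ∈ s, c.1 * q (c.2 * x) = x
  rw [Finset.sum_congr rfl fun c _ ↦ hPx c, ← Finset.sum_mul, ← map_sum, hC_one, one_mul]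

variable {k H : Type*} [Field k] [Ring H] [HopfAlgebra k H]

variable (k) in
/-- A left integral of a Hopf algebra. -/
def IsLeftIntegral (L : H) : Prop := ∀ h : H, h * L = counit (R := k) h • L

variable (k) in
/-- A right integral of a Hopf algebra. -/
def IsRightIntegral (L : H) : Prop := ∀ h : H, L * h = counit (R := k) h • L

lemma tmul_one_mul_lTensor_comul_of_isRightIntegral {L : H} (hL : IsRightIntegral k L)
    (f : H →ₗ[k] H) (x : H) : (L ⊗ₜ[k] 1) * LinearMap.lTensor H f (comul x) = L ⊗ₜ f x := by
  conv_rhs => rw [← sum_counit_smul (ℛ k x)]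
  rw [← (ℛ k x).eq]
  simp [Finset.mul_sum, hL _, TensorProduct.smul_tmul, TensorProduct.tmul_sum]

lemma comul_mul_tmul_one_of_isLeftIntegral {L : H} (hL : IsLeftIntegral k L) (x : H) :
    comul x * (L ⊗ₜ[k] (1 : H)) = L ⊗ₜ x := by
  conv_rhs => rw [← sum_counit_smul (ℛ k x)]
  rw [← (ℛ k x).eq]
  simp [Finset.sum_mul, hL _, TensorProduct.smul_tmul, TensorProduct.tmul_sum]

/-- Maschke's theorem: `Σ L₁ ⊗ S(L₂)` is a multiple of a separability idempotent. -/
theorem isSemisimpleRing_of_isLeftIntegral {L : H} (hL : IsLeftIntegral k L)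
    (hL0 : counit (R := k) L ≠ 0) : IsSemisimpleRing H := by
  refine isSemisimpleRing_of_separability (k := k)
    (C := (counit (R := k) L)⁻¹ • galoisMap (antipode k) (L ⊗ₜ 1)) (fun h ↦ ?_) ?_
  · rw [mul_smul_comm, smul_mul_assoc, ← galoisMap_antipode_comul_mul,
      comul_mul_tmul_one_of_isLeftIntegral hL, galoisMap_tmul, galoisMap_tmul,
      ← one_def, mul_one]
  · rw [galoisMap_tmul, ← one_def, mul_one, map_smul, mul_antipode_lTensor_comul_apply,
      Algebra.algebraMap_eq_smul_one, inv_smul_smul₀ hL0]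

theorem exists_isLeftIntegral_counit_eq_one [IsSemisimpleRing H] :
    ∃ L : H, IsLeftIntegral k L ∧ counit (R := k) L = 1 := by
  let I : Submodule H H := RingHom.ker (Bialgebra.counitAlgHom k H)
  obtain ⟨J, hIJ⟩ := exists_isCompl I
  obtain ⟨a, ha, L, hL, haL⟩ := Submodule.mem_sup.mp
    (hIJ.sup_eq_top ▸ Submodule.mem_top : (1 : H) ∈ I ⊔ J)
  have hIL (x : H) (hx : counit (R := k) x = 0) : x * L = 0 := by
    refine Submodule.disjoint_def.mp hIJ.disjoint _ ?_ (J.smul_mem x hL)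
    change counit (R := k) (x * L) = 0
    rw [Bialgebra.counit_mul, hx, zero_mul]
  refine ⟨L, fun h ↦ ?_, ?_⟩
  · have h0 := hIL (h - algebraMap k H (counit (R := k) h)) (by simp)
    rwa [sub_mul, sub_eq_zero, ← Algebra.smul_def] at h0
  · have ha' : counit (R := k) a = 0 := ha
    rw [← Bialgebra.counit_one (R := k) (A := H), ← haL, map_add, ha', zero_add]

lemma IsLeftIntegral.isRightIntegral {L : H} (hL : IsLeftIntegral k L)
    (hL1 : counit (R := k) L = 1) (hS : Function.Surjective (antipode k (A := H))) :
    IsRightIntegral k L := by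
  have hSL : IsRightIntegral k (antipode k L) := by
    intro h
    obtain ⟨y, rfl⟩ := hS h
    rw [← antipode_mul_antidistrib, hL, map_smul, counit_antipode]
  have hSL_eq : antipode k L = L := by
    have h := hL (antipode k L)
    rwa [hSL L, hL1, one_smul, counit_antipode, hL1, one_smul] at h
  rwa [hSL_eq] at hSL

lemma IsLeftIntegral.mem_center {L : H} (hL : IsLeftIntegral k L) (hR : IsRightIntegral k L) :
    L ∈ Subalgebra.center k H :=
  Subalgebra.mem_center_iff.mpr fun h ↦ (hL h).trans (hR h).symm

lemma comul_mul_tmul_one_eq_of_isRightIntegral {L : H} (hL : IsRightIntegral k L) (x : H) :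
    comul L * (x ⊗ₜ[k] 1) = comul L * (1 ⊗ₜ antipode k x) := by
  have hx : x ⊗ₜ[k] (1 : H) =
      galoisMap LinearMap.id (LinearMap.lTensor H (antipode k) (comul x)) := by
    have h := DFunLike.congr_fun galoisMap_id_mul_galoisMap_antipode (x ⊗ₜ[k] (1 : H))
    rw [End.mul_apply, galoisMap_tmul (antipode k), ← one_def, mul_one] at h
    exact h.symm
  rw [hx, ← galoisMap_id_tmul_one_mul, tmul_one_mul_lTensor_comul_of_isRightIntegral hL,
    galoisMap_tmul, LinearMap.lTensor_id, LinearMap.id_apply]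

/-- `z = Σ L₁ z S(L₂) = Σ L₁ S²(z) S(L₂) = S²(z)` for an integral `L` with `ε(L) = 1`. -/
theorem antipodeSq_eq_self_of_mem_center {L : H} (hL : IsRightIntegral k L)
    (hL1 : counit (R := k) L = 1) (hS : Function.Surjective (antipode k (A := H))) {z : H}
    (hz : z ∈ Subalgebra.center k H) : antipodeSq k H z = z := by
  rw [Subalgebra.mem_center_iff] at hz
  have hz' (x : H) : x * antipodeSq k H z = antipodeSq k H z * x := by
    obtain ⟨y, rfl⟩ := hS.comp hS x
    exact ((antipodeSq k H).map_mul y z).symm.trans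
      ((congrArg _ (hz y)).trans ((antipodeSq k H).map_mul z y))
  let F : H ⊗[k] H →ₗ[k] H := LinearMap.mul' k H ∘ₗ LinearMap.lTensor H (antipode k)
  have hFL : F (comul L) = 1 := by
    rw [LinearMap.comp_apply, mul_antipode_lTensor_comul_apply, hL1, map_one]
  have hFleft (X : H ⊗[k] H) : F (X * (z ⊗ₜ 1)) = z * F X := by
    induction X with
    | zero => simp
    | add X Y hX hY => rw [add_mul, map_add, map_add, mul_add, hX, hY]
    | tmul a b => simp [F, hz, mul_assoc]
  have hFright (X : H ⊗[k] H) : F (X * (1 ⊗ₜ antipode k z)) = antipodeSq k H z * F X := by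
    induction X with
    | zero => simp
    | add X Y hX hY => rw [add_mul, map_add, map_add, mul_add, hX, hY]
    | tmul a b =>
      simp only [F, tmul_mul_tmul, mul_one, LinearMap.comp_apply, LinearMap.lTensor_tmul,
        LinearMap.mul'_apply, antipode_mul_antidistrib, ← antipodeSq_apply]
      rw [← mul_assoc, hz', mul_assoc]
  have h := congrArg F (comul_mul_tmul_one_eq_of_isRightIntegral hL z)
  rw [hFleft, hFright, hFL, mul_one, mul_one] at h
  exact h.symm

end Integrals

section DualAction

variable {k H : Type*} [CommRing k] [Ring H] [HopfAlgebra k H]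

/-- The action of the dual of a Hopf algebra on it: `f` acts by `x ↦ Σ f(x₁) x₂`. -/
noncomputable def dualAction : Dual k H →ₗ[k] End k H :=
  LinearMap.lcomp k H comul ∘ₗ
    LinearMap.compRight k (TensorProduct.lid k H).toLinearMap ∘ₗ LinearMap.rTensorHom H

lemma dualAction_apply (f : Dual k H) (x : H) :
    dualAction f x = TensorProduct.lid k H (LinearMap.rTensor H f (comul x)) := rfl

lemma dualAction_counit : dualAction (counit (R := k) (A := H)) = 1 := by
  refine LinearMap.ext fun x ↦ ?_
  rw [dualAction_apply, rTensor_counit_comul, TensorProduct.lid_tmul, one_smul, End.one_apply]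

lemma dualAction_mul_dualAction (f g : Dual k H) :
    dualAction f * dualAction g = dualAction (toConv g * toConv f).ofConv := by
  refine LinearMap.ext fun x ↦ ?_
  let F : H ⊗[k] (H ⊗[k] H) →ₗ[k] H := (TensorProduct.lid k H).toLinearMap ∘ₗ
    TensorProduct.map g ((TensorProduct.lid k H).toLinearMap ∘ₗ LinearMap.rTensor H f)
  have hleft (X : H ⊗[k] H) : dualAction f (TensorProduct.lid k H (LinearMap.rTensor H g X)) =
      F (LinearMap.lTensor H comul X) := by
    induction X with
    | zero => simp
    | add X Y hX hY => simp only [map_add, hX, hY]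
    | tmul x y => simp [F, dualAction_apply]
  have hright (X : H ⊗[k] H) :
      TensorProduct.lid k H (LinearMap.rTensor H (toConv g * toConv f).ofConv X) =
        F (TensorProduct.assoc k H H H (LinearMap.rTensor H comul X)) := by
    induction X with
    | zero => simp
    | add X Y hX hY => simp only [map_add, hX, hY]
    | tmul x y =>
      change LinearMap.mul' k k (TensorProduct.map g f (comul x)) • y =
        F (TensorProduct.assoc k H H H (comul x ⊗ₜ y))
      induction comul (R := k) x with
      | zero => simp
      | add X Y hX hY => simp only [map_add, TensorProduct.add_tmul, add_smul, hX, hY]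
      | tmul u v => simp [F, mul_smul, smul_comm (f v)]
  rw [End.mul_apply, dualAction_apply g, hleft, dualAction_apply, hright, coassoc_apply]

lemma commute_antipodeSq_dualAction {f : Dual k H} (hf : f ∘ₗ (antipodeSq k H).toLinearMap = f) :
    Commute (antipodeSq k H).toLinearMap (dualAction f) := by
  refine LinearMap.ext fun x ↦ ?_
  rw [End.mul_apply, End.mul_apply, dualAction_apply, dualAction_apply, AlgHom.toLinearMap_apply,
    AlgHom.toLinearMap_apply, comul_antipodeSq]
  induction comul (R := k) x with
  | zero => simp
  | add X Y hX hY => simp only [map_add, hX, hY]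
  | tmul a b =>
    have hfa : f (antipodeSq k H a) = f a := DFunLike.congr_fun hf a
    simp [hfa]

end DualAction

section RegularCharacter

variable {k A B : Type*} [CommRing k] [Ring A] [Algebra k A] [Ring B] [Algebra k B]

variable (k A) in
/-- The character of the left regular representation. -/
noncomputable def regularCharacter : Dual k A := LinearMap.trace k A ∘ₗ LinearMap.mul k A

lemma regularCharacter_apply (x : A) :
    regularCharacter k A x = LinearMap.trace k A (LinearMap.mulLeft k x) := rfl

lemma regularCharacter_one [Module.Free k A] [Module.Finite k A] :
    regularCharacter k A 1 = finrank k A := by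
  rw [regularCharacter_apply, LinearMap.mulLeft_one, LinearMap.trace_id]

lemma regularCharacter_algEquiv (e : A ≃ₐ[k] A) (x : A) :
    regularCharacter k A (e x) = regularCharacter k A x := by
  rw [regularCharacter_apply, regularCharacter_apply,
    ← LinearMap.trace_conj' (LinearMap.mulLeft k x) e.toLinearEquiv]
  congr 1
  ext y
  simp [LinearEquiv.conj_apply]

lemma regularCharacter_tensorProduct [Module.Free k A] [Module.Finite k A] [Module.Free k B]
    [Module.Finite k B] (X : A ⊗[k] B) :
    regularCharacter k (A ⊗[k] B) X =
      LinearMap.mul' k k (TensorProduct.map (regularCharacter k A) (regularCharacter k B) X) := by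
  induction X with
  | zero => simp
  | add X Y hX hY => simp only [map_add, hX, hY]
  | tmul a b =>
    rw [regularCharacter_apply, LinearMap.mulLeft_tmul, LinearMap.trace_tensorProduct',
      TensorProduct.map_tmul, LinearMap.mul'_apply, regularCharacter_apply, regularCharacter_apply]

end RegularCharacter

section LarsonRadford

variable {k H : Type*} [Field k] [Ring H] [HopfAlgebra k H]

/-- The Galois map conjugates left multiplication by `x ⊗ 1` to that by `Δ(x)`. -/
lemma regularCharacter_comul (x : H) :
    regularCharacter k (H ⊗[k] H) (comul x) = regularCharacter k (H ⊗[k] H) (x ⊗ₜ 1) := by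
  have hconj : LinearMap.mulLeft k (comul (R := k) x) =
      galoisMap LinearMap.id *
        (LinearMap.mulLeft k (x ⊗ₜ[k] (1 : H)) * galoisMap (antipode k)) := by
    refine LinearMap.ext fun X ↦ ?_
    have hX := DFunLike.congr_fun galoisMap_id_mul_galoisMap_antipode X
    simp only [End.mul_apply, End.one_apply, LinearMap.mulLeft_apply] at hX ⊢
    rw [galoisMap_id_tmul_one_mul, hX]
  rw [regularCharacter_apply, hconj, LinearMap.trace_mul_comm, mul_assoc,
    galoisMap_antipode_mul_galoisMap_id, mul_one, ← regularCharacter_apply]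

lemma antipodeSq_dualAction_comp_mulLeft (f : Dual k H) (h x : H) :
    antipodeSq k H (dualAction (f ∘ₗ LinearMap.mulLeft k h) x) =
      ∑ i ∈ (ℛ k h).index,
        antipode k ((ℛ k h).right i) * antipodeSq k H (dualAction f ((ℛ k h).left i * x)) := by
  let G : H ⊗[k] H →ₗ[k] H :=
    (TensorProduct.lid k H).toLinearMap ∘ₗ TensorProduct.map f (antipode k)
  have hleft (X : H ⊗[k] H) : G ((h ⊗ₜ 1) * LinearMap.lTensor H (antipode k) X) =
      antipodeSq k H
        (TensorProduct.lid k H (LinearMap.rTensor H (f ∘ₗ LinearMap.mulLeft k h) X)) := by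
    induction X with
    | zero => simp
    | add X Y hX hY => simp only [map_add, mul_add, hX, hY]
    | tmul a b => simp [G, antipodeSq_apply]
  have hright (X : H ⊗[k] H) (c : H) : G (LinearMap.lTensor H (antipode k) X * (1 ⊗ₜ c)) =
      antipode k c * antipodeSq k H (TensorProduct.lid k H (LinearMap.rTensor H f X)) := by
    induction X with
    | zero => simp
    | add X Y hX hY => simp only [map_add, add_mul, mul_add, hX, hY]
    | tmul a b => simp [G, antipodeSq_apply, antipode_mul_antidistrib]
  have hgalois := congrArg G (galoisMap_antipode_comul_mul h (x ⊗ₜ[k] 1))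
  rw [galoisMap_tmul, ← one_def, mul_one, hleft, ← (ℛ k h).eq, Finset.sum_mul, map_sum,
    map_sum] at hgalois
  refine hgalois.symm.trans (Finset.sum_congr rfl fun i _ ↦ ?_)
  rw [tmul_mul_tmul, mul_one, galoisMap_tmul, hright, dualAction_apply]

lemma trace_antipodeSq_mul_dualAction_comp_mulLeft (f : Dual k H) (h : H) :
    LinearMap.trace k H ((antipodeSq k H).toLinearMap * dualAction (f ∘ₗ LinearMap.mulLeft k h)) =
      counit (R := k) h • LinearMap.trace k H ((antipodeSq k H).toLinearMap * dualAction f) := by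
  let T : End k H := (antipodeSq k H).toLinearMap * dualAction f
  let φ : Dual k H := LinearMap.trace k H ∘ₗ LinearMap.mulLeft k T ∘ₗ LinearMap.mul k H
  have hsum : (antipodeSq k H).toLinearMap * dualAction (f ∘ₗ LinearMap.mulLeft k h) =
      ∑ i ∈ (ℛ k h).index, LinearMap.mulLeft k (antipode k ((ℛ k h).right i)) *
        (T * LinearMap.mulLeft k ((ℛ k h).left i)) :=
    LinearMap.ext fun x ↦ (antipodeSq_dualAction_comp_mulLeft f h x).trans (by simp [T])
  have hcycle (a b : H) : LinearMap.trace k H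
      (LinearMap.mulLeft k b * (T * LinearMap.mulLeft k a)) = φ (a * b) := by
    rw [LinearMap.trace_mul_comm, mul_assoc, End.mul_eq_comp (LinearMap.mulLeft k a),
      ← LinearMap.mulLeft_mul]
    rfl
  rw [hsum, map_sum, Finset.sum_congr rfl fun i _ ↦ hcycle _ _, ← map_sum,
    sum_mul_antipode_eq_smul, map_smul]
  change _ • LinearMap.trace k H (T * LinearMap.mulLeft k 1) = _
  rw [LinearMap.mulLeft_one, ← End.one_eq_id, mul_one]

variable [FiniteDimensional k H]

lemma regularCharacter_convMul_self :
    toConv (regularCharacter k H) * toConv (regularCharacter k H) =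
      (finrank k H : k) • toConv (regularCharacter k H) := by
  refine ofConv_injective (LinearMap.ext fun x ↦ ?_)
  change LinearMap.mul' k k (TensorProduct.map (regularCharacter k H) (regularCharacter k H)
    (comul x)) = (finrank k H : k) * regularCharacter k H x
  rw [← regularCharacter_tensorProduct, regularCharacter_comul, regularCharacter_tensorProduct,
    TensorProduct.map_tmul, LinearMap.mul'_apply, regularCharacter_one, mul_comm]

variable (k H) in
/-- The integral `L` with `f(L) = Tr(S² ∘ (x ↦ f(x₁) x₂))` for every functional `f`. -/
noncomputable def traceIntegral : H :=
  (evalEquiv k H).symm (LinearMap.trace k H ∘ₗ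
    LinearMap.mulLeft k (antipodeSq k H).toLinearMap ∘ₗ dualAction)

lemma apply_traceIntegral (f : Dual k H) :
    f (traceIntegral k H) = LinearMap.trace k H ((antipodeSq k H).toLinearMap * dualAction f) :=
  apply_evalEquiv_symm_apply k H f _

variable (k H) in
lemma isLeftIntegral_traceIntegral : IsLeftIntegral k (traceIntegral k H) := by
  intro h
  rw [← sub_eq_zero, ← forall_dual_apply_eq_zero_iff k]
  intro f
  have hf := apply_traceIntegral (f ∘ₗ LinearMap.mulLeft k h)
  rw [trace_antipodeSq_mul_dualAction_comp_mulLeft, ← apply_traceIntegral] at hf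
  rw [map_sub, map_smul, sub_eq_zero]
  exact hf

lemma counit_traceIntegral :
    counit (R := k) (traceIntegral k H) = LinearMap.trace k H (antipodeSq k H).toLinearMap := by
  rw [apply_traceIntegral (counit (R := k)), dualAction_counit, mul_one]

theorem isSemisimpleRing_of_trace_antipodeSq_ne_zero
    (htr : LinearMap.trace k H (antipodeSq k H).toLinearMap ≠ 0) : IsSemisimpleRing H :=
  isSemisimpleRing_of_isLeftIntegral (isLeftIntegral_traceIntegral k H)
    (by rwa [counit_traceIntegral])

lemma IsRightIntegral.trace_comp_mulLeft {L : H} (hL : IsRightIntegral k L) (T : End k H) :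
    LinearMap.trace k H (T ∘ₗ LinearMap.mulLeft k L) = counit (R := k) (T L) := by
  have hT : T ∘ₗ LinearMap.mulLeft k L = (counit (R := k)).smulRight (T L) := by
    ext x
    simp [hL x]
  rw [hT, LinearMap.trace_smulRight]

lemma toLinearMap_pow_eq_one {k A : Type*} [CommRing k] [Ring A] [Algebra k A]
    {θ : A →ₐ[k] A} {N : ℕ}
    (hθ : θ ^ N = 1) : θ.toLinearMap ^ N = 1 :=
  ((map_pow AlgHom.toEnd θ N).symm.trans (congrArg AlgHom.toEnd hθ)).trans (map_one AlgHom.toEnd)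

lemma trace_antipodeSq_mul_dualAction_regularCharacter [IsSemisimpleRing H]
    (hS : Function.Surjective (antipode k (A := H))) :
    LinearMap.trace k H ((antipodeSq k H).toLinearMap * dualAction (regularCharacter k H)) =
      LinearMap.trace k H (antipodeSq k H).toLinearMap := by
  obtain ⟨Λ, hleft, hΛ⟩ := exists_isLeftIntegral_counit_eq_one (k := k) (H := H)
  have hright := hleft.isRightIntegral hΛ hS
  have hχ : regularCharacter k H Λ = 1 := (hright.trace_comp_mulLeft 1).trans hΛ
  have htraceIntegral :
      traceIntegral k H = LinearMap.trace k H (antipodeSq k H).toLinearMap • Λ := by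
    rw [← counit_traceIntegral, ← hright, isLeftIntegral_traceIntegral, hΛ, one_smul]
  rw [← apply_traceIntegral, htraceIntegral, map_smul, hχ, smul_eq_mul, mul_one]

variable [IsAlgClosed k] [CharZero k] [IsSemisimpleRing H] {N : ℕ} [NeZero N]

/-- Otherwise `Tr(S² ∘ L_z) = 0` for every central `z`, whereas `Tr(S² ∘ L_Λ) = ε(Λ) = 1` for the
normalized integral `Λ`. -/
theorem trace_antipodeSq_ne_zero (hN : antipodeSq k H ^ N = 1) :
    LinearMap.trace k H (antipodeSq k H).toLinearMap ≠ 0 := by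
  obtain ⟨Λ, hleft, hΛ⟩ := exists_isLeftIntegral_counit_eq_one (k := k) (H := H)
  have hS := antipode_surjective_of_antipodeSq_pow_eq_one hN
  have hright := hleft.isRightIntegral hΛ hS
  intro htr
  have h := trace_comp_mulLeft_eq_zero_of_trace_eq_zero hN
    (fun z hz ↦ antipodeSq_eq_self_of_mem_center hright hΛ hS hz) htr (hleft.mem_center hright)
  rw [hright.trace_comp_mulLeft, AlgHom.toLinearMap_apply, counit_antipodeSq, hΛ] at h
  exact one_ne_zero h

/-- The operator `S² ∘ E`, where `E` is the idempotent given by the normalized regular character,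
has finite order up to a projection, and its trace is `Tr(S²) / dim H`. -/
lemma isIntegral_trace_antipodeSq_div_finrank [Nontrivial H] (hN : antipodeSq k H ^ N = 1) :
    IsIntegral ℤ (LinearMap.trace k H (antipodeSq k H).toLinearMap / finrank k H) := by
  let n : k := finrank k H
  have hn : n ≠ 0 := Nat.cast_ne_zero.mpr finrank_pos.ne'
  let E : End k H := n⁻¹ • dualAction (regularCharacter k H)
  have hE : IsIdempotentElem E := by
    change (n⁻¹ • _) * (n⁻¹ • _) = _
    rw [smul_mul_smul_comm, dualAction_mul_dualAction, regularCharacter_convMul_self, ofConv_smul,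
      ofConv_toConv, map_smul, smul_smul, mul_assoc, inv_mul_cancel₀ hn, mul_one]
  let e := AlgEquiv.algHomUnitsEquiv k H (Units.ofPowEqOne (antipodeSq k H) N hN (NeZero.ne N))
  have hcomm : Commute (antipodeSq k H).toLinearMap E :=
    (commute_antipodeSq_dualAction (LinearMap.ext (regularCharacter_algEquiv e))).smul_right n⁻¹
  have hTE : ((antipodeSq k H).toLinearMap * E) ^ (N + 1) = (antipodeSq k H).toLinearMap * E := by
    rw [hcomm.mul_pow, hE.pow_succ_eq, pow_succ, toLinearMap_pow_eq_one hN, one_mul]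
  have hint := isIntegral_trace_of_pow_succ_eq_self (NeZero.ne N) hTE
  rwa [mul_smul_comm, map_smul, trace_antipodeSq_mul_dualAction_regularCharacter
    (antipode_surjective_of_antipodeSq_pow_eq_one hN), smul_eq_mul, inv_mul_eq_div] at hint

theorem antipodeSq_eq_one (hN : antipodeSq k H ^ N = 1) : antipodeSq k H = 1 := by
  obtain hH | hH := subsingleton_or_nontrivial H
  · exact AlgHom.ext fun x ↦ Subsingleton.elim _ _
  obtain ⟨L, _, _, _, ζ, hζ⟩ := exists_numberField_isPrimitiveRoot k N
  have hone := eq_one_of_isIntegral_trace_div_finrank hζ (toLinearMap_pow_eq_one hN)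
    (one_ne_zero (α := H)) (map_one (antipodeSq k H)) (trace_antipodeSq_ne_zero hN)
    (isIntegral_trace_antipodeSq_div_finrank hN)
  exact AlgHom.ext fun x ↦ DFunLike.congr_fun hone x

end LarsonRadford

section Sandwich

variable {k A B C : Type*} [CommRing k] [Ring A] [Algebra k A] [AddCommGroup B] [Module k B]
  [AddCommGroup C] [Module k C]

/-- The map sending `b ⊗ c` to the endomorphism `z ↦ g(c) z f(b)`. For `f` multiplicative and `g`
antimultiplicative it is a right action. -/
noncomputable def sandwich (f : B →ₗ[k] A) (g : C →ₗ[k] A) : B ⊗[k] C →ₗ[k] End k A :=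
  TensorProduct.lift ((LinearMap.mul k (End k A)).flip.compl₁₂
    ((LinearMap.mul k A).flip ∘ₗ f) (LinearMap.mul k A ∘ₗ g))

lemma sandwich_tmul (f : B →ₗ[k] A) (g : C →ₗ[k] A) (b : B) (c : C) (z : A) :
    sandwich f g (b ⊗ₜ c) z = g c * z * f b := by
  simp [sandwich, mul_assoc]

end Sandwich

section UniversalRMatrix

variable {k H : Type*} [CommRing k] [Ring H] [HopfAlgebra k H]

/-- Universal R-matrices: `R` is invertible, `(Δ ⊗ id)(R) = R₁₃ R₂₃`, `(id ⊗ Δ)(R) = R₁₃ R₁₂` and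
`Δᵒᵖ(h) R = R Δ(h)`. The leg embeddings `R₁₃`, `R₁₂`, `R₂₃` take values in `H ⊗ (H ⊗ H)`. -/
structure IsUniversalRMatrix (R : H ⊗[k] H) : Prop where
  isUnit : IsUnit R
  assoc_rTensor_comul : TensorProduct.assoc k H H H (LinearMap.rTensor H comul R) =
    Algebra.TensorProduct.map (AlgHom.id k H) includeRight R *
      (includeRight : H ⊗[k] H →ₐ[k] H ⊗[k] (H ⊗[k] H)) R
  lTensor_comul : LinearMap.lTensor H comul R =
    Algebra.TensorProduct.map (AlgHom.id k H) includeRight R *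
      Algebra.TensorProduct.map (AlgHom.id k H) includeLeft R
  comm_comul_mul (h : H) : TensorProduct.comm k H H (comul h) * R = R * comul h

namespace IsUniversalRMatrix

variable {R : H ⊗[k] H} (hR : IsUniversalRMatrix R)
include hR

lemma lid_rTensor_counit : TensorProduct.lid k H (LinearMap.rTensor H counit R) = 1 := by
  let T : H ⊗[k] (H ⊗[k] H) →ₐ[k] H ⊗[k] H := (Algebra.TensorProduct.lid k (H ⊗[k] H)).toAlgHom.comp
    (Algebra.TensorProduct.map (Bialgebra.counitAlgHom k H) (AlgHom.id k _))
  have hcomul (X : H ⊗[k] H) :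
      T (TensorProduct.assoc k H H H (LinearMap.rTensor H comul X)) = X := by
    induction X with
    | zero => simp
    | add X Y hX hY => simp only [map_add, hX, hY]
    | tmul a b =>
      have ha := congrArg (TensorProduct.lid k H) (rTensor_counit_comul (R := k) a)
      rw [LinearMap.rTensor_tmul]
      conv_rhs => rw [← one_smul k a, ← TensorProduct.lid_tmul, ← ha]
      induction comul (R := k) a with
      | zero => simp
      | add X Y hX hY => simp only [map_add, TensorProduct.add_tmul, hX, hY]
      | tmul x y => simp [T, TensorProduct.smul_tmul']
  have hfst (X : H ⊗[k] H) : T (Algebra.TensorProduct.map (AlgHom.id k H) includeRight X) =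
      1 ⊗ₜ TensorProduct.lid k H (LinearMap.rTensor H counit X) := by
    induction X with
    | zero => simp
    | add X Y hX hY => simp only [map_add, TensorProduct.tmul_add, hX, hY]
    | tmul a b => simp [T]
  have hmul : 1 * R = (1 ⊗ₜ TensorProduct.lid k H (LinearMap.rTensor H counit R)) * R := by
    have h := congrArg T hR.assoc_rTensor_comul
    rw [hcomul, map_mul, hfst] at h
    simpa [T] using h
  simpa [Algebra.TensorProduct.one_def] using
    congrArg (TensorProduct.lid k H ∘ LinearMap.rTensor H counit)
      (hR.isUnit.mul_right_cancel hmul).symm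

lemma rid_lTensor_counit : TensorProduct.rid k H (LinearMap.lTensor H counit R) = 1 := by
  let T : H ⊗[k] (H ⊗[k] H) →ₐ[k] H ⊗[k] H := Algebra.TensorProduct.map (AlgHom.id k H)
    ((Algebra.TensorProduct.lid k H).toAlgHom.comp
      (Algebra.TensorProduct.map (Bialgebra.counitAlgHom k H) (AlgHom.id k _)))
  have hcomul (X : H ⊗[k] H) : T (LinearMap.lTensor H comul X) = X := by
    induction X with
    | zero => simp
    | add X Y hX hY => simp only [map_add, hX, hY]
    | tmul a b =>
      have hb := congrArg (TensorProduct.lid k H) (rTensor_counit_comul (R := k) b)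
      rw [TensorProduct.lid_tmul, one_smul] at hb
      exact congrArg (a ⊗ₜ[k] ·) hb
  have hfst (X : H ⊗[k] H) : T (Algebra.TensorProduct.map (AlgHom.id k H) includeRight X) = X := by
    induction X with
    | zero => simp
    | add X Y hX hY => simp only [map_add, hX, hY]
    | tmul a b => simp [T]
  have hsnd (X : H ⊗[k] H) : T (Algebra.TensorProduct.map (AlgHom.id k H) includeLeft X) =
      TensorProduct.rid k H (LinearMap.lTensor H counit X) ⊗ₜ 1 := by
    induction X with
    | zero => simp
    | add X Y hX hY => simp only [map_add, TensorProduct.add_tmul, hX, hY]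
    | tmul a b => simp [T, TensorProduct.smul_tmul']
  have hmul : R * 1 = R * (TensorProduct.rid k H (LinearMap.lTensor H counit R) ⊗ₜ 1) := by
    have h := congrArg T hR.lTensor_comul
    rw [hcomul, map_mul, hfst, hsnd] at h
    rw [mul_one, ← h]
  simpa [Algebra.TensorProduct.one_def] using
    congrArg (TensorProduct.rid k H ∘ LinearMap.lTensor H counit)
      (hR.isUnit.mul_left_cancel hmul).symm

lemma rTensor_antipode_mul_self : LinearMap.rTensor H (antipode k) R * R = 1 := by
  let T : H ⊗[k] (H ⊗[k] H) →ₗ[k] H ⊗[k] H :=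
    LinearMap.rTensor H (LinearMap.mul' k H ∘ₗ LinearMap.rTensor H (antipode k)) ∘ₗ
      (TensorProduct.assoc k H H H).symm.toLinearMap
  have hcomul (X : H ⊗[k] H) : T (TensorProduct.assoc k H H H (LinearMap.rTensor H comul X)) =
      1 ⊗ₜ TensorProduct.lid k H (LinearMap.rTensor H counit X) := by
    induction X with
    | zero => simp
    | add X Y hX hY => simp only [map_add, TensorProduct.tmul_add, hX, hY]
    | tmul a b => simp [T, Algebra.algebraMap_eq_smul_one, TensorProduct.smul_tmul]
  have hmul (X Y : H ⊗[k] H) :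
      T (Algebra.TensorProduct.map (AlgHom.id k H) includeRight X * includeRight Y) =
        LinearMap.rTensor H (antipode k) X * Y := by
    induction X with
    | zero => simp
    | add X X' hX hX' => simp only [map_add, add_mul, hX, hX']
    | tmul a b =>
      induction Y with
      | zero => simp
      | add Y Y' hY hY' => simp only [map_add, mul_add, hY, hY']
      | tmul c d => simp [T]
  rw [← hmul, ← hR.assoc_rTensor_comul, hcomul, hR.lid_rTensor_counit, one_def]

lemma self_mul_rTensor_antipode : R * LinearMap.rTensor H (antipode k) R = 1 :=
  hR.isUnit.mul_right_cancel (by rw [mul_assoc, hR.rTensor_antipode_mul_self, mul_one, one_mul])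

lemma map_antipode_antipode : TensorProduct.map (antipode k) (antipode k) R = R := by
  let T : H ⊗[k] (H ⊗[k] H) →ₗ[k] H ⊗[k] H :=
    TensorProduct.map (antipode k) (LinearMap.mul' k H ∘ₗ LinearMap.lTensor H (antipode k))
  have hcomul (X : H ⊗[k] H) : T (LinearMap.lTensor H comul X) =
      antipode k (TensorProduct.rid k H (LinearMap.lTensor H counit X)) ⊗ₜ 1 := by
    induction X with
    | zero => simp
    | add X Y hX hY => simp only [map_add, TensorProduct.add_tmul, hX, hY]
    | tmul a b => simp [T, Algebra.algebraMap_eq_smul_one, TensorProduct.smul_tmul]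
  have hmul (X Y : H ⊗[k] H) :
      T (Algebra.TensorProduct.map (AlgHom.id k H) includeRight X *
        Algebra.TensorProduct.map (AlgHom.id k H) includeLeft Y) =
        LinearMap.rTensor H (antipode k) Y * TensorProduct.map (antipode k) (antipode k) X := by
    induction X with
    | zero => simp
    | add X X' hX hX' => simp only [map_add, add_mul, mul_add, hX, hX']
    | tmul a b =>
      induction Y with
      | zero => simp
      | add Y Y' hY hY' => simp only [map_add, add_mul, mul_add, hY, hY']
      | tmul c d => simp [T, antipode_mul_antidistrib]
  have hright : LinearMap.rTensor H (antipode k) R * TensorProduct.map (antipode k) (antipode k) R =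
      1 := by
    rw [← hmul, ← hR.lTensor_comul, hcomul, hR.rid_lTensor_counit, antipode_one, one_def]
  exact (left_inv_eq_right_inv hR.self_mul_rTensor_antipode hright).symm

end IsUniversalRMatrix
end UniversalRMatrix

section DrinfeldElement

variable {k H : Type*} [CommRing k] [Ring H] [HopfAlgebra k H]

lemma sandwich_antipode_mul (X Y : H ⊗[k] H) (z : H) :
    sandwich LinearMap.id (antipode k) (X * Y) z =
      sandwich LinearMap.id (antipode k) Y (sandwich LinearMap.id (antipode k) X z) := by
  induction X with
  | zero => simp
  | add X X' hX hX' => simp only [map_add, add_mul, LinearMap.add_apply, hX, hX']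
  | tmul a b =>
    induction Y with
    | zero => simp
    | add Y Y' hY hY' => simp only [map_add, mul_add, LinearMap.add_apply, hY, hY']
    | tmul c d => simp [sandwich_tmul, antipode_mul_antidistrib, mul_assoc]

lemma sandwich_antipode_comm_comul (x : H) :
    sandwich LinearMap.id (antipode k) (TensorProduct.comm k H H (comul x)) 1 =
      algebraMap k H (counit x) := by
  rw [← mul_antipode_rTensor_comul_apply]
  induction comul (R := k) x with
  | zero => simp
  | add X Y hX hY => simp only [map_add, LinearMap.add_apply, hX, hY]
  | tmul a b => simp [sandwich_tmul]

/-- Both sides are `∑ S²(x₃) S(x₂) z x₁`, evaluated in the two orders. -/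
lemma antipodeSq_mul_of_sandwich_comul {z : H}
    (hz : ∀ x : H, sandwich LinearMap.id (antipode k) (comul (R := k) x) z = counit (R := k) x • z)
    (x : H) : antipodeSq k H x * z = z * x := by
  let F : H ⊗[k] (H ⊗[k] H) →ₗ[k] H := TensorProduct.lift
    ((LinearMap.mul k H).flip.compl₁₂ (LinearMap.mulLeft k z)
      (antipode k ∘ₗ LinearMap.mul' k H ∘ₗ LinearMap.lTensor H (antipode k)))
  have hleft (X : H ⊗[k] H) : F (TensorProduct.assoc k H H H (LinearMap.rTensor H comul X)) =
      antipodeSq k H (TensorProduct.lid k H (LinearMap.rTensor H counit X)) * z := by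
    induction X with
    | zero => simp
    | add X Y hX hY => simp only [map_add, add_mul, hX, hY]
    | tmul a b =>
      have hF (Y : H ⊗[k] H) : F (TensorProduct.assoc k H H H (Y ⊗ₜ b)) =
          antipodeSq k H b * sandwich LinearMap.id (antipode k) Y z := by
        induction Y with
        | zero => simp
        | add X Y hX hY =>
          simp only [TensorProduct.add_tmul, map_add, LinearMap.add_apply, mul_add, hX, hY]
        | tmul c d => simp [F, sandwich_tmul, antipode_mul_antidistrib, antipodeSq_apply, mul_assoc]
      simp [hF, hz]
  have hright (X : H ⊗[k] H) : F (LinearMap.lTensor H comul X) =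
      z * TensorProduct.rid k H (LinearMap.lTensor H counit X) := by
    induction X with
    | zero => simp
    | add X Y hX hY => simp only [map_add, mul_add, hX, hY]
    | tmul a b => simp [F, Algebra.algebraMap_eq_smul_one]
  have hcoassoc := congrArg F (coassoc_apply (R := k) x)
  rw [hleft, hright, rTensor_counit_comul, lTensor_counit_comul] at hcoassoc
  simpa using hcoassoc

/-- The Drinfeld element `u = ∑ S(b) a` of `R = ∑ a ⊗ b`. -/
noncomputable def drinfeldElement (R : H ⊗[k] H) : H :=
  sandwich LinearMap.id (antipode k) R 1

/-- The element `∑ b S²(a)` for `R = ∑ a ⊗ b`, which for a universal R-matrix is inverse to the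
Drinfeld element. -/
noncomputable def drinfeldElementInv (R : H ⊗[k] H) : H :=
  LinearMap.mul' k H (TensorProduct.comm k H H
    (LinearMap.rTensor H (antipodeSq k H).toLinearMap R))

/-- The element `u S(u)⁻¹` attached to `R`, where `u` is the Drinfeld element. -/
noncomputable def drinfeldGroupLike (R : H ⊗[k] H) : H :=
  drinfeldElement R * antipode k (drinfeldElementInv R)

namespace IsUniversalRMatrix

variable {R : H ⊗[k] H} (hR : IsUniversalRMatrix R)
include hR

/-- Acting on `1` by `R Δ(x) = Δᵒᵖ(x) R`. -/
lemma sandwich_comul_drinfeldElement (x : H) :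
    sandwich LinearMap.id (antipode k) (comul (R := k) x) (drinfeldElement R) =
      counit (R := k) x • drinfeldElement R := by
  rw [drinfeldElement, ← sandwich_antipode_mul, ← hR.comm_comul_mul, sandwich_antipode_mul,
    sandwich_antipode_comm_comul, Algebra.algebraMap_eq_smul_one, map_smul]

lemma antipodeSq_mul_drinfeldElement (x : H) :
    antipodeSq k H x * drinfeldElement R = drinfeldElement R * x :=
  antipodeSq_mul_of_sandwich_comul hR.sandwich_comul_drinfeldElement x

/-- Acting on `u = 1 · R` by `R⁻¹ = (S ⊗ id)(R)` gives back `1`. -/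
lemma drinfeldElementInv_mul_drinfeldElement : drinfeldElementInv R * drinfeldElement R = 1 := by
  have hact (X : H ⊗[k] H) :
      sandwich LinearMap.id (antipode k) (LinearMap.rTensor H (antipode k) X) (drinfeldElement R) =
        drinfeldElementInv (TensorProduct.map (antipode k) (antipode k) X) * drinfeldElement R := by
    induction X with
    | zero => simp [drinfeldElementInv]
    | add X Y hX hY =>
      simp only [map_add, LinearMap.add_apply, hX, hY, drinfeldElementInv, add_mul]
    | tmul a b =>
      simp [sandwich_tmul, drinfeldElementInv, mul_assoc, hR.antipodeSq_mul_drinfeldElement]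
  have h := hact R
  rw [hR.map_antipode_antipode] at h
  rw [← h, drinfeldElement, ← sandwich_antipode_mul, hR.self_mul_rTensor_antipode, one_def]
  simp [sandwich_tmul]

lemma antipodeSq_drinfeldElementInv :
    antipodeSq k H (drinfeldElementInv R) = drinfeldElementInv R := by
  have hmap (X : H ⊗[k] H) : antipodeSq k H (drinfeldElementInv X) = drinfeldElementInv
      (TensorProduct.map (antipode k) (antipode k)
        (TensorProduct.map (antipode k) (antipode k) X)) := by
    induction X with
    | zero => simp [drinfeldElementInv]
    | add X Y hX hY => simp_all [drinfeldElementInv]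
    | tmul a b => simp [drinfeldElementInv, antipodeSq_apply, antipode_mul_antidistrib]
  rw [hmap, hR.map_antipode_antipode, hR.map_antipode_antipode]

lemma drinfeldElement_mul_drinfeldElementInv : drinfeldElement R * drinfeldElementInv R = 1 := by
  rw [← hR.antipodeSq_mul_drinfeldElement, hR.antipodeSq_drinfeldElementInv,
    hR.drinfeldElementInv_mul_drinfeldElement]

lemma antipode_drinfeldElement_mul_antipode_drinfeldElementInv :
    antipode k (drinfeldElement R) * antipode k (drinfeldElementInv R) = 1 := by
  rw [← antipode_mul_antidistrib, hR.drinfeldElementInv_mul_drinfeldElement, antipode_one]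

lemma antipode_drinfeldElementInv_mul_antipode_drinfeldElement :
    antipode k (drinfeldElementInv R) * antipode k (drinfeldElement R) = 1 := by
  rw [← antipode_mul_antidistrib, hR.drinfeldElement_mul_drinfeldElementInv, antipode_one]

lemma antipodeSq_surjective : Function.Surjective (antipodeSq k H) := fun x ↦ by
  refine ⟨drinfeldElementInv R * x * drinfeldElement R, ?_⟩
  have h := hR.antipodeSq_mul_drinfeldElement (drinfeldElementInv R * x * drinfeldElement R)
  rw [← mul_assoc, ← mul_assoc, hR.drinfeldElement_mul_drinfeldElementInv, one_mul] at h
  simpa [mul_assoc, hR.drinfeldElement_mul_drinfeldElementInv] using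
    congrArg (· * drinfeldElementInv R) h

lemma antipode_drinfeldElement_mul_antipodeSq (x : H) :
    antipode k (drinfeldElement R) * antipodeSq k H x = x * antipode k (drinfeldElement R) := by
  obtain ⟨y, rfl⟩ := hR.antipodeSq_surjective x
  simpa only [antipode_mul_antidistrib, antipodeSq_apply] using
    congrArg (antipode k) (hR.antipodeSq_mul_drinfeldElement (antipode k y))

lemma antipodeSq_mul_antipode_drinfeldElementInv (x : H) :
    antipodeSq k H x * antipode k (drinfeldElementInv R) =
      antipode k (drinfeldElementInv R) * x := by
  have h := congrArg (antipode k (drinfeldElementInv R) * · * antipode k (drinfeldElementInv R))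
    (hR.antipode_drinfeldElement_mul_antipodeSq x)
  simp only [mul_assoc, hR.antipode_drinfeldElement_mul_antipode_drinfeldElementInv, mul_one] at h
  rwa [← mul_assoc, hR.antipode_drinfeldElementInv_mul_antipode_drinfeldElement, one_mul] at h

lemma antipodeSq_antipodeSq_mul_drinfeldGroupLike (x : H) :
    antipodeSq k H (antipodeSq k H x) * drinfeldGroupLike R = drinfeldGroupLike R * x := by
  rw [drinfeldGroupLike, ← mul_assoc, hR.antipodeSq_mul_drinfeldElement, mul_assoc,
    hR.antipodeSq_mul_antipode_drinfeldElementInv, mul_assoc]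

lemma drinfeldGroupLike_mul_antipode_drinfeldElement :
    drinfeldGroupLike R * antipode k (drinfeldElement R) = drinfeldElement R := by
  rw [drinfeldGroupLike, mul_assoc, hR.antipode_drinfeldElementInv_mul_antipode_drinfeldElement,
    mul_one]

end IsUniversalRMatrix
end DrinfeldElement

section GroupLike

variable {k H : Type*} [CommRing k] [Ring H] [HopfAlgebra k H]

lemma map_antipode_antipode_mul (X Y : H ⊗[k] H) :
    TensorProduct.map (antipode k) (antipode k) (X * Y) =
      TensorProduct.map (antipode k) (antipode k) Y *
        TensorProduct.map (antipode k) (antipode k) X :=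
  antipode_mul_antidistrib X Y

lemma comm_mul (X Y : H ⊗[k] H) : TensorProduct.comm k H H (X * Y) =
    TensorProduct.comm k H H X * TensorProduct.comm k H H Y :=
  map_mul (Algebra.TensorProduct.comm k H H) X Y

lemma comul_antipode (x : H) :
    comul (antipode k x) =
      TensorProduct.map (antipode k) (antipode k) (TensorProduct.comm k H H (comul x)) :=
  DFunLike.congr_fun comul_comp_antipode x

lemma sandwich_comul (g : H →ₗ[k] H ⊗[k] H) (X : H ⊗[k] H) :
    sandwich comul g X = sandwich LinearMap.id g (LinearMap.rTensor H comul X) := by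
  induction X with
  | zero => simp
  | add X Y hX hY => simp only [map_add, hX, hY]
  | tmul a b =>
    ext z
    simp [sandwich_tmul]

lemma sandwich_mk_antipode_assoc_symm_mul (X Y z : H ⊗[k] H) :
    sandwich LinearMap.id (TensorProduct.mk k H H 1 ∘ₗ antipode k)
        ((TensorProduct.assoc k H H H).symm
          (Algebra.TensorProduct.map (AlgHom.id k H) includeRight X * includeRight Y)) z =
      sandwich (TensorProduct.mk k H H 1) (TensorProduct.mk k H H 1 ∘ₗ antipode k) Y
        (sandwich ((TensorProduct.mk k H H).flip 1)
          (TensorProduct.mk k H H 1 ∘ₗ antipode k) X z) := by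
  induction X with
  | zero => simp
  | add X X' hX hX' => simp only [map_add, add_mul, LinearMap.add_apply, hX, hX']
  | tmul a b =>
    induction Y with
    | zero => simp
    | add Y Y' hY hY' => simp only [map_add, mul_add, LinearMap.add_apply, hY, hY']
    | tmul c d =>
      induction z with
      | zero => simp
      | add z z' hz hz' => simp only [map_add, hz, hz']
      | tmul x y => simp [sandwich_tmul, antipode_mul_antidistrib, mul_assoc]

lemma sandwich_mk_mk_antipode_one (X : H ⊗[k] H) :
    sandwich (TensorProduct.mk k H H 1) (TensorProduct.mk k H H 1 ∘ₗ antipode k) X 1 =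
      1 ⊗ₜ drinfeldElement X := by
  induction X with
  | zero => simp [drinfeldElement]
  | add X Y hX hY =>
    simp only [map_add, LinearMap.add_apply, hX, hY, drinfeldElement, TensorProduct.tmul_add]
  | tmul a b => simp [sandwich_tmul, drinfeldElement]

namespace IsUniversalRMatrix

variable {R : H ⊗[k] H} (hR : IsUniversalRMatrix R)
include hR

lemma comul_mul_comm_mul_self (x : H) :
    comul x * (TensorProduct.comm k H H R * R) = TensorProduct.comm k H H R * R * comul x := by
  have h := congrArg (TensorProduct.comm k H H) (hR.comm_comul_mul x)
  rw [comm_mul, comm_mul, TensorProduct.comm_comm] at h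
  rw [← mul_assoc, h, mul_assoc, hR.comm_comul_mul, mul_assoc]

/-- Apply `id ⊗ S` to `(S ⊗ id)(R) R = 1`. -/
lemma sandwich_flip_mk_self : sandwich ((TensorProduct.mk k H H).flip 1)
    (TensorProduct.mk k H H 1 ∘ₗ antipode k) R R = 1 := by
  have hmul (X Y : H ⊗[k] H) :
      LinearMap.lTensor H (antipode k) (LinearMap.rTensor H (antipode k) X * Y) =
        sandwich ((TensorProduct.mk k H H).flip 1) (TensorProduct.mk k H H 1 ∘ₗ antipode k) Y
          (TensorProduct.map (antipode k) (antipode k) X) := by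
    induction X with
    | zero => simp
    | add X X' hX hX' => simp only [map_add, add_mul, hX, hX']
    | tmul a b =>
      induction Y with
      | zero => simp
      | add Y Y' hY hY' => simp only [map_add, mul_add, LinearMap.add_apply, hY, hY']
      | tmul c d => simp [sandwich_tmul, antipode_mul_antidistrib]
  have h := hmul R R
  rw [hR.map_antipode_antipode, hR.rTensor_antipode_mul_self, one_def, LinearMap.lTensor_tmul,
    antipode_one, ← one_def] at h
  exact h.symm

lemma sandwich_comul_mk_self :
    sandwich comul (TensorProduct.mk k H H 1 ∘ₗ antipode k) R R = 1 ⊗ₜ drinfeldElement R := by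
  rw [sandwich_comul,
    ← (TensorProduct.assoc k H H H).symm_apply_apply (LinearMap.rTensor H comul R),
    hR.assoc_rTensor_comul, sandwich_mk_antipode_assoc_symm_mul, hR.sandwich_flip_mk_self,
    sandwich_mk_mk_antipode_one]

lemma sandwich_comm_comul_flip_mk_comm_self :
    sandwich ((TensorProduct.comm k H H).toLinearMap ∘ₗ comul)
      ((TensorProduct.mk k H H).flip 1 ∘ₗ antipode k) R (TensorProduct.comm k H H R) =
        drinfeldElement R ⊗ₜ 1 := by
  have hcomm (X z : H ⊗[k] H) : TensorProduct.comm k H H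
      (sandwich comul (TensorProduct.mk k H H 1 ∘ₗ antipode k) X z) =
        sandwich ((TensorProduct.comm k H H).toLinearMap ∘ₗ comul)
          ((TensorProduct.mk k H H).flip 1 ∘ₗ antipode k) X (TensorProduct.comm k H H z) := by
    induction X with
    | zero => simp
    | add X Y hX hY => simp only [map_add, LinearMap.add_apply, hX, hY]
    | tmul a b => simp [sandwich_tmul, comm_mul]
  rw [← hcomm, hR.sandwich_comul_mk_self, TensorProduct.comm_tmul]

lemma sandwich_comul_mul (X Y : H ⊗[k] H) :
    sandwich comul (TensorProduct.map (antipode k) (antipode k) ∘ₗ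
        (TensorProduct.comm k H H).toLinearMap)
        (Algebra.TensorProduct.map (AlgHom.id k H) includeRight X *
          Algebra.TensorProduct.map (AlgHom.id k H) includeLeft Y)
        (TensorProduct.comm k H H R * R) =
      sandwich comul (TensorProduct.mk k H H 1 ∘ₗ antipode k) Y
        (sandwich ((TensorProduct.comm k H H).toLinearMap ∘ₗ comul)
          ((TensorProduct.mk k H H).flip 1 ∘ₗ antipode k) X (TensorProduct.comm k H H R) * R) := by
  induction X with
  | zero => simp
  | add X X' hX hX' => simp only [map_add, add_mul, LinearMap.add_apply, hX, hX']
  | tmul a b =>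
    induction Y with
    | zero => simp
    | add Y Y' hY hY' => simp only [map_add, mul_add, LinearMap.add_apply, hY, hY']
    | tmul c d =>
      have hS : antipode k b ⊗ₜ[k] antipode k d = (1 ⊗ₜ antipode k d) * (antipode k b ⊗ₜ 1) := by
        simp
      have hRa : R * (comul a * comul c) = TensorProduct.comm k H H (comul a) * (R * comul c) := by
        rw [← mul_assoc, ← hR.comm_comul_mul, mul_assoc]
      simp only [Algebra.TensorProduct.map_tmul, AlgHom.id_apply, includeRight_apply,
        includeLeft_apply, tmul_mul_tmul, one_mul, mul_one, sandwich_tmul, LinearMap.comp_apply,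
        LinearEquiv.coe_coe, TensorProduct.comm_tmul, TensorProduct.map_tmul,
        TensorProduct.mk_apply, LinearMap.flip_apply, Bialgebra.comul_mul]
      rw [hS]
      simp only [mul_assoc, hRa]

lemma comul_drinfeldElement_mul :
    comul (drinfeldElement R) * (TensorProduct.comm k H H R * R) =
      drinfeldElement R ⊗ₜ[k] drinfeldElement R := by
  have hcomul (X : H ⊗[k] H) : comul (drinfeldElement X) * (TensorProduct.comm k H H R * R) =
      sandwich comul (TensorProduct.map (antipode k) (antipode k) ∘ₗ
        (TensorProduct.comm k H H).toLinearMap) (LinearMap.lTensor H comul X)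
          (TensorProduct.comm k H H R * R) := by
    induction X with
    | zero => simp [drinfeldElement]
    | add X Y hX hY => simp_all [drinfeldElement, add_mul]
    | tmul a b =>
      simp only [drinfeldElement, sandwich_tmul, LinearMap.id_coe, id_eq, mul_one,
        LinearMap.lTensor_tmul, LinearMap.comp_apply, LinearEquiv.coe_coe, Bialgebra.comul_mul,
        ← comul_antipode]
      rw [mul_assoc, hR.comul_mul_comm_mul_self, ← mul_assoc]
  have hmul (X : H ⊗[k] H) :
      sandwich comul (TensorProduct.mk k H H 1 ∘ₗ antipode k) X ((drinfeldElement R ⊗ₜ 1) * R) =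
        (drinfeldElement R ⊗ₜ 1) * sandwich comul (TensorProduct.mk k H H 1 ∘ₗ antipode k) X R := by
    induction X with
    | zero => simp
    | add X Y hX hY => simp only [map_add, LinearMap.add_apply, mul_add, hX, hY]
    | tmul a b => simp [sandwich_tmul, ← mul_assoc]
  rw [hcomul, hR.lTensor_comul, hR.sandwich_comul_mul, hR.sandwich_comm_comul_flip_mk_comm_self,
    hmul, hR.sandwich_comul_mk_self, tmul_mul_tmul, mul_one, one_mul]

lemma comul_antipode_drinfeldElement_mul :
    comul (antipode k (drinfeldElement R)) * (TensorProduct.comm k H H R * R) =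
      antipode k (drinfeldElement R) ⊗ₜ[k] antipode k (drinfeldElement R) := by
  have hcomm : TensorProduct.map (antipode k) (antipode k) (TensorProduct.comm k H H R) =
      TensorProduct.comm k H H R := by
    rw [TensorProduct.map_comm, hR.map_antipode_antipode]
  have h := congrArg (fun X ↦ TensorProduct.map (antipode k) (antipode k)
    (TensorProduct.comm k H H X)) hR.comul_drinfeldElement_mul
  simp only [comm_mul, map_antipode_antipode_mul, TensorProduct.comm_comm, ← comul_antipode, hcomm,
    hR.map_antipode_antipode] at h
  rw [hR.comul_mul_comm_mul_self, h, TensorProduct.comm_tmul, TensorProduct.map_tmul]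

lemma isGroupLikeElem_drinfeldGroupLike : IsGroupLikeElem k (drinfeldGroupLike R) := by
  refine ⟨?_, ?_⟩
  · rw [drinfeldGroupLike, Bialgebra.counit_mul, counit_antipode, ← Bialgebra.counit_mul,
      hR.drinfeldElement_mul_drinfeldElementInv, Bialgebra.counit_one]
  · have h := hR.comul_drinfeldElement_mul
    rw [← hR.drinfeldGroupLike_mul_antipode_drinfeldElement, Bialgebra.comul_mul, mul_assoc,
      hR.comul_antipode_drinfeldElement_mul] at h
    simpa [mul_assoc, hR.antipode_drinfeldElement_mul_antipode_drinfeldElementInv, ← one_def] using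
      congrArg (· * (antipode k (drinfeldElementInv R) ⊗ₜ[k] antipode k (drinfeldElementInv R))) h

end IsUniversalRMatrix
end GroupLike

section FiniteOrder

variable {k H : Type*} [Field k] [Ring H] [HopfAlgebra k H] [FiniteDimensional k H]

theorem exists_pow_eq_one_of_isGroupLikeElem {g : H} (hg : IsGroupLikeElem k g) :
    ∃ M : ℕ, M ≠ 0 ∧ g ^ M = 1 := by
  have : Finite (GroupLike k H) := linearIndep_groupLikeVal.finite
  refine ⟨Nat.card (GroupLike k H), Nat.card_pos.ne', ?_⟩
  exact congrArg GroupLike.val (pow_card_eq_one' (x := (⟨g, hg⟩ : GroupLike k H)))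

theorem IsUniversalRMatrix.exists_antipodeSq_pow_eq_one {R : H ⊗[k] H}
    (hR : IsUniversalRMatrix R) : ∃ N : ℕ, N ≠ 0 ∧ antipodeSq k H ^ N = 1 := by
  obtain ⟨M, hM, hg⟩ := exists_pow_eq_one_of_isGroupLikeElem hR.isGroupLikeElem_drinfeldGroupLike
  have hconj (j : ℕ) (x : H) :
      ((antipodeSq k H ^ 2) ^ j) x * drinfeldGroupLike R ^ j = drinfeldGroupLike R ^ j * x := by
    induction j generalizing x with
    | zero => simp
    | succ j ih =>
      rw [pow_succ, AlgHom.mul_apply, pow_succ (drinfeldGroupLike R), ← mul_assoc, ih, pow_two,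
        AlgHom.mul_apply, mul_assoc, hR.antipodeSq_antipodeSq_mul_drinfeldGroupLike, mul_assoc]
  refine ⟨2 * M, by positivity, AlgHom.ext fun x ↦ ?_⟩
  simpa [hg, pow_mul] using hconj M x

end FiniteOrder

section TraceForm

variable {k A : Type*} [CommRing k] [Ring A] [Algebra k A]

lemma apply_mul'_comm_mul_of_commute {χ : Dual k A} (hχ : ∀ x y, χ (x * y) = χ (y * x))
    {ρ : A ⊗[k] A} {x : A} (hx : Commute (1 ⊗ₜ x) ρ) :
    χ (LinearMap.mul' k A (TensorProduct.comm k A A ρ) * x) = χ (LinearMap.mul' k A ρ * x) := by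
  have hright (σ : A ⊗[k] A) :
      LinearMap.mul' k A σ * x = LinearMap.mul' k A (σ * (1 ⊗ₜ x)) := by
    induction σ with
    | zero => simp
    | add σ τ hσ hτ => simp only [map_add, add_mul, hσ, hτ]
    | tmul a b => simp [mul_assoc]
  have hleft (σ : A ⊗[k] A) : χ (LinearMap.mul' k A (TensorProduct.comm k A A σ) * x) =
      χ (LinearMap.mul' k A ((1 ⊗ₜ x) * σ)) := by
    induction σ with
    | zero => simp
    | add σ τ hσ hτ => simp only [map_add, add_mul, mul_add, hσ, hτ]
    | tmul a b => simp [mul_assoc, hχ b]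
  rw [hleft, hright, hx.eq]

lemma regularCharacter_mul_comm (x y : A) :
    regularCharacter k A (x * y) = regularCharacter k A (y * x) := by
  rw [regularCharacter_apply, regularCharacter_apply, LinearMap.mulLeft_mul, LinearMap.mulLeft_mul]
  exact LinearMap.trace_mul_comm k _ _

end TraceForm

section DrinfeldElement

variable {k H : Type*} [CommRing k] [Ring H] [HopfAlgebra k H]

lemma drinfeldElement_eq_mul'_comm (X : H ⊗[k] H) : drinfeldElement X =
    LinearMap.mul' k H (TensorProduct.comm k H H (LinearMap.lTensor H (antipode k) X)) := by
  induction X with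
  | zero => simp [drinfeldElement]
  | add X Y hX hY => simp_all [drinfeldElement]
  | tmul a b => simp [drinfeldElement, sandwich_tmul]

lemma one_tmul_mul_of_antipodeSq_mul {y : H} (hy : ∀ x, antipodeSq k H x * y = y * x)
    (X : H ⊗[k] H) :
    (1 ⊗ₜ y) * X = LinearMap.lTensor H (antipodeSq k H).toLinearMap X * (1 ⊗ₜ y) := by
  induction X with
  | zero => simp
  | add X Y hX hY => simp only [map_add, mul_add, add_mul, hX, hY]
  | tmul a b => simp [hy]

namespace IsUniversalRMatrix

variable {R : H ⊗[k] H} (hR : IsUniversalRMatrix R)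

include hR in
lemma antipode_drinfeldElement : antipode k (drinfeldElement R) =
    LinearMap.mul' k H (LinearMap.lTensor H (antipode k) R) := by
  have hmap (X : H ⊗[k] H) : antipode k (drinfeldElement X) = LinearMap.mul' k H
      (LinearMap.lTensor H (antipode k) (TensorProduct.map (antipode k) (antipode k) X)) := by
    induction X with
    | zero => simp [drinfeldElement]
    | add X Y hX hY => simp_all [drinfeldElement]
    | tmul a b => simp [drinfeldElement, sandwich_tmul, antipode_mul_antidistrib]
  rw [hmap, hR.map_antipode_antipode]

end IsUniversalRMatrix

lemma commute_one_tmul_lTensor_antipode {R : H ⊗[k] H}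
    (hfix : LinearMap.lTensor H (antipodeSq k H).toLinearMap R = R) {y : H}
    (hy : ∀ x, antipodeSq k H x * y = y * x) :
    Commute (1 ⊗ₜ y) (LinearMap.lTensor H (antipode k) R) := by
  have hcomm : (antipodeSq k H).toLinearMap ∘ₗ antipode k =
      antipode k ∘ₗ (antipodeSq k H).toLinearMap := rfl
  rw [Commute, SemiconjBy, one_tmul_mul_of_antipodeSq_mul hy, ← LinearMap.lTensor_comp_apply, hcomm,
    LinearMap.lTensor_comp_apply, hfix]

/-- Since `S(u) = ∑ a S(b)` and `u = ∑ S(b) a`, the trace property of `χ` cannot distinguish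
`u x` from `S(u) x` when `x` commutes with every `S(b)`. -/
lemma IsUniversalRMatrix.regularCharacter_drinfeldGroupLike_pow {R : H ⊗[k] H}
    (hR : IsUniversalRMatrix R) (hfix : LinearMap.lTensor H (antipodeSq k H).toLinearMap R = R)
    (j : ℕ) : regularCharacter k H (drinfeldGroupLike R ^ j) = regularCharacter k H 1 := by
  have hw : Commute (1 ⊗ₜ antipode k (drinfeldElementInv R))
      (LinearMap.lTensor H (antipode k) R) :=
    commute_one_tmul_lTensor_antipode hfix hR.antipodeSq_mul_antipode_drinfeldElementInv
  have hg : Commute (1 ⊗ₜ drinfeldGroupLike R) (LinearMap.lTensor H (antipode k) R) := by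
    have h := (commute_one_tmul_lTensor_antipode hfix hR.antipodeSq_mul_drinfeldElement).mul_left hw
    rwa [tmul_mul_tmul, one_mul] at h
  induction j with
  | zero => rw [pow_zero]
  | succ j ih =>
    have hx : Commute (1 ⊗ₜ (antipode k (drinfeldElementInv R) * drinfeldGroupLike R ^ j))
        (LinearMap.lTensor H (antipode k) R) := by
      have h := hw.mul_left (hg.pow_left j)
      rwa [tmul_pow, one_pow, tmul_mul_tmul, one_mul] at h
    have h := apply_mul'_comm_mul_of_commute (regularCharacter_mul_comm (k := k)) hx
    rw [← drinfeldElement_eq_mul'_comm, ← hR.antipode_drinfeldElement, ← mul_assoc, ← mul_assoc,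
      hR.antipode_drinfeldElement_mul_antipode_drinfeldElementInv, one_mul, ih] at h
    rw [pow_succ', ← h, drinfeldGroupLike]

end DrinfeldElement

section OddDimension

variable {k H : Type*} [Field k] [CharZero k] [Ring H] [HopfAlgebra k H]
  [FiniteDimensional k H] {R : H ⊗[k] H} (hR : IsUniversalRMatrix R)
  (hfix : LinearMap.lTensor H (antipodeSq k H).toLinearMap R = R)
include hR hfix

namespace IsUniversalRMatrix

theorem drinfeldGroupLike_eq_one : drinfeldGroupLike R = 1 := by
  obtain ⟨M, hM, hg⟩ := exists_pow_eq_one_of_isGroupLikeElem hR.isGroupLikeElem_drinfeldGroupLike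
  have hT : LinearMap.mulLeft k (drinfeldGroupLike R) = 1 := by
    refine eq_one_of_pow_eq_one_of_trace_pow_eq_finrank hM ?_ fun j ↦ ?_
    · rw [LinearMap.pow_mulLeft, hg, LinearMap.mulLeft_one]
      rfl
    · rw [LinearMap.pow_mulLeft, ← regularCharacter_apply,
        hR.regularCharacter_drinfeldGroupLike_pow hfix, regularCharacter_one]
  simpa using DFunLike.congr_fun hT 1

theorem antipodeSq_sq_eq_one : antipodeSq k H ^ 2 = 1 := by
  ext x
  have h := hR.antipodeSq_antipodeSq_mul_drinfeldGroupLike x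
  rwa [hR.drinfeldGroupLike_eq_one hfix, mul_one, one_mul] at h

theorem isSemisimpleRing_of_odd_finrank (hodd : Odd (finrank k H)) : IsSemisimpleRing H :=
  isSemisimpleRing_of_trace_antipodeSq_ne_zero
    (trace_ne_zero_of_sq_eq_one_of_odd_finrank
      (toLinearMap_pow_eq_one (hR.antipodeSq_sq_eq_one hfix)) hodd)

end IsUniversalRMatrix
end OddDimension

section HopfSubalgebra

variable {k H : Type*} [Field k] [Ring H] [HopfAlgebra k H]

/-- Hopf subalgebras: subalgebras `K` with `Δ(K) ⊆ K ⊗ K` and `S(K) ⊆ K`, where `K ⊗ K` is regarded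
as a subalgebra of `H ⊗ H`. -/
structure IsHopfSubalgebra (K : Subalgebra k H) : Prop where
  comul_mem : ∀ x ∈ K, comul x ∈ (Algebra.TensorProduct.map K.val K.val).range
  antipode_mem : ∀ x ∈ K, antipode k x ∈ K

lemma map_val_val_injective (K : Subalgebra k H) :
    Function.Injective (Algebra.TensorProduct.map K.val K.val) :=
  map_injective_of_flat_flat K.val.toLinearMap K.val.toLinearMap Subtype.val_injective
    Subtype.val_injective

namespace IsHopfSubalgebra

variable {K : Subalgebra k H} (hK : IsHopfSubalgebra K)

/-- The comultiplication of a Hopf subalgebra. -/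
noncomputable def comulAlgHom : K →ₐ[k] K ⊗[k] K :=
  (AlgEquiv.ofInjective _ (map_val_val_injective K)).symm.toAlgHom.comp
    (((Bialgebra.comulAlgHom k H).comp K.val).codRestrict _ fun x ↦ hK.comul_mem x x.2)

/-- The antipode of a Hopf subalgebra. -/
noncomputable def antipodeLinearMap : K →ₗ[k] K :=
  (antipode k).restrict (p := K.toSubmodule) (q := K.toSubmodule) hK.antipode_mem

lemma map_val_comulAlgHom (x : K) :
    Algebra.TensorProduct.map K.val K.val (hK.comulAlgHom x) = comul (x : H) :=
  congrArg Subtype.val (AlgEquiv.apply_symm_apply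
    (AlgEquiv.ofInjective _ (map_val_val_injective K)) ⟨comul (x : H), hK.comul_mem x x.2⟩)

lemma map_val_assoc_map_comulAlgHom (X : K ⊗[k] K) :
    Algebra.TensorProduct.map K.val (Algebra.TensorProduct.map K.val K.val)
        (Algebra.TensorProduct.assoc k k k K K K
          (Algebra.TensorProduct.map hK.comulAlgHom (AlgHom.id k K) X)) =
      TensorProduct.assoc k H H H
        (LinearMap.rTensor H comul (Algebra.TensorProduct.map K.val K.val X)) := by
  induction X with
  | zero => simp
  | add X Y hX hY => simp only [map_add, hX, hY]
  | tmul x y =>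
    simp only [Algebra.TensorProduct.map_tmul, LinearMap.rTensor_tmul, AlgHom.id_apply,
      Subalgebra.coe_val, ← hK.map_val_comulAlgHom x]
    induction hK.comulAlgHom x with
    | zero => simp
    | add X Y hX hY => simp only [map_add, TensorProduct.add_tmul, hX, hY]
    | tmul u v => simp

lemma map_val_map_id_comulAlgHom (X : K ⊗[k] K) :
    Algebra.TensorProduct.map K.val (Algebra.TensorProduct.map K.val K.val)
        (Algebra.TensorProduct.map (AlgHom.id k K) hK.comulAlgHom X) =
      LinearMap.lTensor H comul (Algebra.TensorProduct.map K.val K.val X) := by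
  induction X with
  | zero => simp
  | add X Y hX hY => simp only [map_add, hX, hY]
  | tmul x y => simp [hK.map_val_comulAlgHom]

lemma val_lid_map_counit (X : K ⊗[k] K) :
    (TensorProduct.lid k K (Algebra.TensorProduct.map
        ((Bialgebra.counitAlgHom k H).comp K.val) (AlgHom.id k K) X) : H) =
      TensorProduct.lid k H
        (LinearMap.rTensor H counit (Algebra.TensorProduct.map K.val K.val X)) := by
  induction X with
  | zero => simp
  | add X Y hX hY => simp only [map_add, Subalgebra.coe_add, hX, hY]
  | tmul x y => simp

lemma val_rid_map_counit (X : K ⊗[k] K) :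
    (TensorProduct.rid k K (Algebra.TensorProduct.map (AlgHom.id k K)
        ((Bialgebra.counitAlgHom k H).comp K.val) X) : H) =
      TensorProduct.rid k H
        (LinearMap.lTensor H counit (Algebra.TensorProduct.map K.val K.val X)) := by
  induction X with
  | zero => simp
  | add X Y hX hY => simp only [map_add, Subalgebra.coe_add, hX, hY]
  | tmul x y => simp

lemma val_mul'_rTensor_antipodeLinearMap (X : K ⊗[k] K) :
    (LinearMap.mul' k K (LinearMap.rTensor K hK.antipodeLinearMap X) : H) =
      LinearMap.mul' k H
        (LinearMap.rTensor H (antipode k) (Algebra.TensorProduct.map K.val K.val X)) := by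
  induction X with
  | zero => simp
  | add X Y hX hY => simp only [map_add, Subalgebra.coe_add, hX, hY]
  | tmul x y => rfl

lemma val_mul'_lTensor_antipodeLinearMap (X : K ⊗[k] K) :
    (LinearMap.mul' k K (LinearMap.lTensor K hK.antipodeLinearMap X) : H) =
      LinearMap.mul' k H
        (LinearMap.lTensor H (antipode k) (Algebra.TensorProduct.map K.val K.val X)) := by
  induction X with
  | zero => simp
  | add X Y hX hY => simp only [map_add, Subalgebra.coe_add, hX, hY]
  | tmul x y => rfl

/-- The bialgebra structure of a Hopf subalgebra. -/
noncomputable abbrev bialgebra : Bialgebra k K :=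
  Bialgebra.ofAlgHom hK.comulAlgHom ((Bialgebra.counitAlgHom k H).comp K.val)
    (AlgHom.ext fun x ↦ by
      have hinj : Function.Injective
          (Algebra.TensorProduct.map K.val (Algebra.TensorProduct.map K.val K.val)) :=
        map_injective_of_flat_flat K.val.toLinearMap
          (Algebra.TensorProduct.map K.val K.val).toLinearMap Subtype.val_injective
          (map_val_val_injective K)
      refine hinj ((hK.map_val_assoc_map_comulAlgHom (hK.comulAlgHom x)).trans
        (Eq.trans ?_ (hK.map_val_map_id_comulAlgHom (hK.comulAlgHom x)).symm))
      rw [hK.map_val_comulAlgHom, coassoc_apply])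
    (AlgHom.ext fun x ↦ (TensorProduct.lid k K).injective <| Subtype.ext <| by
      refine (val_lid_map_counit (hK.comulAlgHom x)).trans ?_
      rw [hK.map_val_comulAlgHom, rTensor_counit_comul]
      simp)
    (AlgHom.ext fun x ↦ (TensorProduct.rid k K).injective <| Subtype.ext <| by
      refine (val_rid_map_counit (hK.comulAlgHom x)).trans ?_
      rw [hK.map_val_comulAlgHom, lTensor_counit_comul]
      simp)

/-- The Hopf algebra structure of a Hopf subalgebra. -/
noncomputable abbrev hopfAlgebra : HopfAlgebra k K :=
  { hK.bialgebra with
    antipode := hK.antipodeLinearMap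
    mul_antipode_rTensor_comul := LinearMap.ext fun x ↦ Subtype.ext <| by
      refine (hK.val_mul'_rTensor_antipodeLinearMap (hK.comulAlgHom x)).trans ?_
      rw [hK.map_val_comulAlgHom, mul_antipode_rTensor_comul_apply]
      rfl
    mul_antipode_lTensor_comul := LinearMap.ext fun x ↦ Subtype.ext <| by
      refine (hK.val_mul'_lTensor_antipodeLinearMap (hK.comulAlgHom x)).trans ?_
      rw [hK.map_val_comulAlgHom, mul_antipode_lTensor_comul_apply]
      rfl }

variable [IsAlgClosed k] [CharZero k] [FiniteDimensional k H]
include hK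

theorem isSemisimpleRing_iff_antipodeSq_eq {N : ℕ} [NeZero N] (hN : antipodeSq k H ^ N = 1) :
    IsSemisimpleRing K ↔ ∀ x ∈ K, antipodeSq k H x = x := by
  let _ := hK.hopfAlgebra
  have hval (x : K) : (antipodeSq k K x : H) = antipodeSq k H x := rfl
  refine ⟨fun _ x hx ↦ ?_, fun h ↦ isSemisimpleRing_of_trace_antipodeSq_ne_zero (k := k) ?_⟩
  · have hpow (n : ℕ) (y : K) : ((antipodeSq k K ^ n) y : H) = (antipodeSq k H ^ n) y := by
      induction n generalizing y with
      | zero => simp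
      | succ n ih => rw [pow_succ, pow_succ, AlgHom.mul_apply, AlgHom.mul_apply, ih, hval]
    have hK1 : antipodeSq k K = 1 := antipodeSq_eq_one (N := N) <|
      AlgHom.ext fun y ↦ Subtype.ext ((hpow N y).trans (by rw [hN]; rfl))
    rw [← hval ⟨x, hx⟩, hK1, AlgHom.one_apply]
  · have hid : (antipodeSq k K).toLinearMap = LinearMap.id :=
      LinearMap.ext fun x ↦ Subtype.ext (h x x.2)
    have : Nontrivial K := (Bialgebra.counitAlgHom k K).toRingHom.domain_nontrivial
    rw [hid, LinearMap.trace_id]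
    exact_mod_cast (finrank_pos (R := k) (M := K)).ne'

end IsHopfSubalgebra
end HopfSubalgebra

section LeftSubalgebra

section Contraction

variable {k M M' N N' : Type*} [CommRing k] [AddCommGroup M] [Module k M] [AddCommGroup M']
  [Module k M'] [AddCommGroup N] [Module k N] [AddCommGroup N'] [Module k N']

lemma lid_rTensor_map (f : Dual k M') (a : M →ₗ[k] M') (b : N →ₗ[k] N') (X : M ⊗[k] N) :
    TensorProduct.lid k N' (LinearMap.rTensor N' f (TensorProduct.map a b X)) =
      b (TensorProduct.lid k N (LinearMap.rTensor N (f ∘ₗ a) X)) := by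
  induction X with
  | zero => simp
  | add X Y hX hY => simp only [map_add, hX, hY]
  | tmul x y => simp

lemma ext_lid_rTensor [Module.Free k M] {X Y : M ⊗[k] N}
    (h : ∀ f : Dual k M, TensorProduct.lid k N (LinearMap.rTensor N f X) =
      TensorProduct.lid k N (LinearMap.rTensor N f Y)) : X = Y := by
  classical
  refine (equivFinsuppOfBasisLeft (Module.Free.chooseBasis k M)).injective (Finsupp.ext fun i ↦ ?_)
  rw [equivFinsuppOfBasisLeft_apply, equivFinsuppOfBasisLeft_apply, h]

lemma mem_range_lTensor_subtype [Module.Free k M] {P : Submodule k N} {X : M ⊗[k] N}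
    (h : ∀ f : Dual k M, TensorProduct.lid k N (LinearMap.rTensor N f X) ∈ P) :
    X ∈ LinearMap.range (LinearMap.lTensor M P.subtype) := by
  classical
  rw [← (equivFinsuppOfBasisLeft (N := N) (Module.Free.chooseBasis k M)).symm_apply_apply X,
    equivFinsuppOfBasisLeft_symm_apply]
  refine sum_mem fun i _ ↦ ?_
  rw [equivFinsuppOfBasisLeft_apply]
  exact ⟨Module.Free.chooseBasis k M i ⊗ₜ ⟨_, h _⟩, rfl⟩

end Contraction

variable {k H : Type*} [Field k] [Ring H] [HopfAlgebra k H]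

/-- The subalgebra `H_l` generated by the elements `(f ⊗ id)(R)`, for `f` in the dual of `H`. -/
def leftSubalgebra (R : H ⊗[k] H) : Subalgebra k H :=
  Algebra.adjoin k {y | ∃ f : Dual k H, y = TensorProduct.lid k H (LinearMap.rTensor H f R)}

lemma lid_rTensor_mem_leftSubalgebra (R : H ⊗[k] H) (f : Dual k H) :
    TensorProduct.lid k H (LinearMap.rTensor H f R) ∈ leftSubalgebra R :=
  Algebra.subset_adjoin ⟨f, rfl⟩

lemma lTensor_antipodeSq_eq_self {R : H ⊗[k] H}
    (h : ∀ x ∈ leftSubalgebra R, antipodeSq k H x = x) :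
    LinearMap.lTensor H (antipodeSq k H).toLinearMap R = R :=
  ext_lid_rTensor fun f ↦ by
    rw [LinearMap.lTensor, lid_rTensor_map, LinearMap.comp_id]
    exact h _ (lid_rTensor_mem_leftSubalgebra R f)

lemma exists_map_id_val_eq (R : H ⊗[k] H) : ∃ ρ : H ⊗[k] leftSubalgebra R,
    Algebra.TensorProduct.map (AlgHom.id k H) (leftSubalgebra R).val ρ = R :=
  mem_range_lTensor_subtype (P := (leftSubalgebra R).toSubmodule) (lid_rTensor_mem_leftSubalgebra R)

namespace IsUniversalRMatrix

variable {R : H ⊗[k] H} (hR : IsUniversalRMatrix R)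
include hR

lemma comul_lid_rTensor_mem (f : Dual k H) :
    comul (TensorProduct.lid k H (LinearMap.rTensor H f R)) ∈
      (Algebra.TensorProduct.map (leftSubalgebra R).val (leftSubalgebra R).val).range := by
  obtain ⟨ρ, hρ⟩ := exists_map_id_val_eq R
  set ι := (leftSubalgebra R).val
  have hfst (X : H ⊗[k] leftSubalgebra R) :
      Algebra.TensorProduct.map (AlgHom.id k H) includeRight
          (Algebra.TensorProduct.map (AlgHom.id k H) ι X) =
        Algebra.TensorProduct.map (AlgHom.id k H) (Algebra.TensorProduct.map ι ι)
          (Algebra.TensorProduct.map (AlgHom.id k H) includeRight X) := by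
    induction X with
    | zero => simp
    | add X Y hX hY => simp only [map_add, hX, hY]
    | tmul x y => simp
  have hsnd (X : H ⊗[k] leftSubalgebra R) :
      Algebra.TensorProduct.map (AlgHom.id k H) includeLeft
          (Algebra.TensorProduct.map (AlgHom.id k H) ι X) =
        Algebra.TensorProduct.map (AlgHom.id k H) (Algebra.TensorProduct.map ι ι)
          (Algebra.TensorProduct.map (AlgHom.id k H) includeLeft X) := by
    induction X with
    | zero => simp
    | add X Y hX hY => simp only [map_add, hX, hY]
    | tmul x y => simp
  have hcomul := lid_rTensor_map f LinearMap.id comul R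
  have hmap := lid_rTensor_map f LinearMap.id (Algebra.TensorProduct.map ι ι).toLinearMap
    (Algebra.TensorProduct.map (AlgHom.id k H) includeRight ρ *
      Algebra.TensorProduct.map (AlgHom.id k H) includeLeft ρ)
  rw [LinearMap.comp_id] at hcomul hmap
  refine ⟨_, hmap.symm.trans (Eq.trans ?_ hcomul)⟩
  change _ = TensorProduct.lid k _ (LinearMap.rTensor _ f (LinearMap.lTensor H comul R))
  rw [hR.lTensor_comul]
  conv_rhs => rw [← hρ, hfst, hsnd, ← map_mul]
  rfl

lemma antipode_injective : Function.Injective (antipode k (A := H)) := by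
  intro x y hxy
  have hu : drinfeldElement R * x = drinfeldElement R * y := by
    rw [← hR.antipodeSq_mul_drinfeldElement, ← hR.antipodeSq_mul_drinfeldElement, antipodeSq_apply,
      antipodeSq_apply, hxy]
  simpa [← mul_assoc, hR.drinfeldElementInv_mul_drinfeldElement] using
    congrArg (drinfeldElementInv R * ·) hu

/-- `S((f ∘ S ⊗ id)(R)) = (f ⊗ id)(R)` because `(S ⊗ S)(R) = R`. -/
lemma antipode_lid_rTensor_mem (f : Dual k H) :
    antipode k (TensorProduct.lid k H (LinearMap.rTensor H f R)) ∈ leftSubalgebra R := by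
  obtain ⟨G, hG⟩ := LinearMap.exists_leftInverse_of_injective (antipode k (A := H))
    (LinearMap.ker_eq_bot.mpr hR.antipode_injective)
  have h := lid_rTensor_map (f ∘ₗ G) (antipode k) (antipode k) R
  rw [hR.map_antipode_antipode, LinearMap.comp_assoc, hG, LinearMap.comp_id] at h
  exact h ▸ lid_rTensor_mem_leftSubalgebra R _

theorem isHopfSubalgebra_leftSubalgebra : IsHopfSubalgebra (leftSubalgebra R) where
  comul_mem := by
    suffices h : leftSubalgebra R ≤ (Algebra.TensorProduct.map (leftSubalgebra R).val
        (leftSubalgebra R).val).range.comap (Bialgebra.comulAlgHom k H) from fun x hx ↦ h hx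
    refine Algebra.adjoin_le ?_
    rintro y ⟨f, rfl⟩
    exact hR.comul_lid_rTensor_mem f
  antipode_mem x hx := by
    induction hx using Algebra.adjoin_induction with
    | mem y hy =>
      obtain ⟨f, rfl⟩ := hy
      exact hR.antipode_lid_rTensor_mem f
    | algebraMap t =>
      rw [Algebra.algebraMap_eq_smul_one, map_smul, antipode_one]
      exact Subalgebra.smul_mem _ (one_mem _) _
    | add x y _ _ hx hy =>
      rw [map_add]
      exact add_mem hx hy
    | mul x y _ _ hx hy =>
      rw [antipode_mul_antidistrib]
      exact mul_mem hy hx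

end IsUniversalRMatrix
end LeftSubalgebra

end FiniteHopf

/-- Let `(H, R)` be an odd-dimensional quasitriangular Hopf algebra over an algebraically
closed field of characteristic 0 (i.e. `R ∈ H ⊗ H` is invertible with
`(Δ ⊗ id)(R) = R₁₃ R₂₃`, `(id ⊗ Δ)(R) = R₁₃ R₁₂`, and `Δᵒᵖ(h) R = R Δ(h)`). Then `H`
is semisimple iff the Hopf subalgebra `H_l = {(f ⊗ id)(R) : f ∈ H*}` is semisimple. -/
theorem stmt_13 (k : Type) [Field k] [IsAlgClosed k] [CharZero k]
    (H : Type) [Ring H] [HopfAlgebra k H] [FiniteDimensional k H]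
    (hodd : Odd (Module.finrank k H))
    (R : H ⊗[k] H) (hRunit : IsUnit R)
    (h1 : (TensorProduct.assoc k H H H)
        ((LinearMap.rTensor H (Coalgebra.comul (R := k) (A := H))) R)
      = (Algebra.TensorProduct.map (AlgHom.id k H)
          (Algebra.TensorProduct.includeRight (R := k) (A := H) (B := H))) R
        * (Algebra.TensorProduct.includeRight (R := k) (A := H) (B := H ⊗[k] H)) R)
    (h2 : (LinearMap.lTensor H (Coalgebra.comul (R := k) (A := H))) R
      = (Algebra.TensorProduct.map (AlgHom.id k H)
          (Algebra.TensorProduct.includeRight (R := k) (A := H) (B := H))) R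
        * (Algebra.TensorProduct.map (AlgHom.id k H)
          (Algebra.TensorProduct.includeLeft (R := k) (S := k) (A := H) (B := H))) R)
    (h3 : ∀ h : H, (TensorProduct.comm k H H) (Coalgebra.comul (R := k) h) * R
        = R * Coalgebra.comul (R := k) h) :
    IsSemisimpleRing H ↔
      IsSemisimpleRing (Algebra.adjoin k
        {y : H | ∃ f : Module.Dual k H, y = TensorProduct.lid k H ((LinearMap.rTensor H f) R)}) := by
  have hR : FiniteHopf.IsUniversalRMatrix R := ⟨hRunit, h1, h2, h3⟩
  obtain ⟨N, hN, hSN⟩ := hR.exists_antipodeSq_pow_eq_one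
  have : NeZero N := ⟨hN⟩
  change _ ↔ IsSemisimpleRing (FiniteHopf.leftSubalgebra R)
  rw [hR.isHopfSubalgebra_leftSubalgebra.isSemisimpleRing_iff_antipodeSq_eq hSN]
  constructor
  · intro _ x _
    rw [FiniteHopf.antipodeSq_eq_one hSN, AlgHom.one_apply]
  · intro hfix
    exact hR.isSemisimpleRing_of_odd_finrank (FiniteHopf.lTensor_antipodeSq_eq_self hfix) hodd
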